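/- Let n ≥ j ≥ 3 and let τ be a pattern of length j. Let Σ_n be a uniformly random permutation of [n], let W be the number of j-element index sets 1 ≤ i_1 < ⋯ < i_j ≤ n at which τ occurs in Σ_n, and let Y be a Poisson random variable with mean λ = C(n,j)/j!. Then d_TV(L(W), L(Y)) ≤ 2·D_{n,j}, where D_{n,j} = min(1, λ^{−1})·(d_1 + d_2), d_1 = C(n,j)·(C(n,j) − C(n−j,j))/(j!)², and d_2 = Σ_{s=1}^{j−1} C(n, 2j−s)·2·L_s(τ)/(2j−s)!. -/

import Mathlib

open scoped Classical
open Filter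

noncomputable section

/-- `τ` occurs in `σ` at the strictly increasing positions given by `f`:
`f` is strictly increasing and `σ ∘ f` is order-isomorphic to `τ`. -/
def OccursAt {m n : ℕ} (τ : Equiv.Perm (Fin m)) (σ : Equiv.Perm (Fin n))
    (f : Fin m → Fin n) : Prop :=
  StrictMono f ∧ ∀ k l, σ (f k) < σ (f l) ↔ τ k < τ l

/-- `τ` occurs in `σ` at the set of positions `α` (listed in increasing order). -/
def OccursOn {m n : ℕ} (τ : Equiv.Perm (Fin m)) (σ : Equiv.Perm (Fin n))
    (α : Finset (Fin n)) : Prop :=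
  ∃ f : Fin m → Fin n, StrictMono f ∧ Finset.univ.image f = α ∧
    ∀ k l, σ (f k) < σ (f l) ↔ τ k < τ l

/-- `τ` occurs in `σ` at the consecutive (0-indexed) positions `i, i+1, …, i+m-1`. -/
def OccursConsec {m n : ℕ} (τ : Equiv.Perm (Fin m)) (σ : Equiv.Perm (Fin n)) (i : ℕ) : Prop :=
  ∃ h : i + m ≤ n, ∀ k l : Fin m,
    σ ⟨i + k, by have := k.isLt; omega⟩ < σ ⟨i + l, by have := l.isLt; omega⟩ ↔ τ k < τ l

/-- The overlap count `L_s(τ)`: the number of permutations of `[2m-s]` containing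
two occurrences of `τ` at index sets sharing exactly `s` elements. -/
def overlapCount {m : ℕ} (τ : Equiv.Perm (Fin m)) (s : ℕ) : ℕ :=
  Set.ncard {ρ : Equiv.Perm (Fin (2 * m - s)) |
    ∃ α β : Finset (Fin (2 * m - s)), α.card = m ∧ β.card = m ∧ (α ∩ β).card = s ∧
      OccursOn τ ρ α ∧ OccursOn τ ρ β}

/-- The sequential overlap count `L̄_s(τ)`: the number of permutations of `[2m-s]` with
occurrences of `τ` at positions `(1,…,m)` and `(m-s+1,…,2m-s)`. -/
def seqOverlapCount {m : ℕ} (τ : Equiv.Perm (Fin m)) (s : ℕ) : ℕ :=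
  Set.ncard {ρ : Equiv.Perm (Fin (2 * m - s)) |
    OccursConsec τ ρ 0 ∧ OccursConsec τ ρ (m - s)}

/-- The number of inversions of a permutation. -/
def invCount {n : ℕ} (σ : Equiv.Perm (Fin n)) : ℕ :=
  (Finset.univ.filter fun p : Fin n × Fin n => p.1 < p.2 ∧ σ p.2 < σ p.1).card

/-- The inversion polynomial `I_n(q) = ∏_{j=1}^n (1 + q + ⋯ + q^{j-1})`. -/
def invPoly (n : ℕ) (q : ℝ) : ℝ :=
  ∏ j ∈ Finset.range n, ∑ i ∈ Finset.range (j + 1), q ^ i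

/-- Probability of the event `E` under the uniform distribution on `S_n`. -/
def unifProb {n : ℕ} (E : Set (Equiv.Perm (Fin n))) : ℝ :=
  (E.ncard : ℝ) / (n.factorial : ℝ)

/-- Probability of the event `E` under the Mallows(q) distribution on `S_n`. -/
def mallowsProb {n : ℕ} (q : ℝ) (E : Set (Equiv.Perm (Fin n))) : ℝ :=
  (∑ σ ∈ Finset.univ.filter (· ∈ E), q ^ invCount σ) / invPoly n q

/-- Expectation of `X` under the uniform distribution on `S_n`. -/
def unifExp {n : ℕ} (X : Equiv.Perm (Fin n) → ℝ) : ℝ :=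
  (∑ σ : Equiv.Perm (Fin n), X σ) / (n.factorial : ℝ)

/-- Expectation of `X` under the Mallows(q) distribution on `S_n`. -/
def mallowsExp {n : ℕ} (q : ℝ) (X : Equiv.Perm (Fin n) → ℝ) : ℝ :=
  (∑ σ : Equiv.Perm (Fin n), X σ * q ^ invCount σ) / invPoly n q

/-- The Poisson(lam) probability mass function. -/
def poissonPMF (lam : ℝ) (k : ℕ) : ℝ :=
  Real.exp (-lam) * lam ^ k / (k.factorial : ℝ)

/-- Total variation distance between the law of the ℕ-valued statistic `W` of a uniformly
random permutation of `[n]` and the Poisson(lam) distribution. -/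
def dTVNatUnif {n : ℕ} (W : Equiv.Perm (Fin n) → ℕ) (lam : ℝ) : ℝ :=
  (1 / 2) * ∑' k : ℕ, |unifProb {σ | W σ = k} - poissonPMF lam k|

/-- Total variation distance between the law of the ℕ-valued statistic `W` of a Mallows(q)
random permutation of `[n]` and the Poisson(lam) distribution. -/
def dTVNatMallows {n : ℕ} (q : ℝ) (W : Equiv.Perm (Fin n) → ℕ) (lam : ℝ) : ℝ :=
  (1 / 2) * ∑' k : ℕ, |mallowsProb q {σ | W σ = k} - poissonPMF lam k|

/-- Total variation distance between the joint law of the indicator family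
`(X_α)_{α ∈ I}` of a uniformly random permutation of `[n]` and the joint law of
independent Bernoulli random variables with marginals `p`. -/
def dTVFamUnif {n : ℕ} {I : Type*} [Fintype I] [DecidableEq I]
    (X : Equiv.Perm (Fin n) → I → Prop) (p : I → ℝ) : ℝ :=
  (1 / 2) * ∑ x : I → Bool,
    |unifProb {σ | ∀ α, X σ α ↔ x α = true} - ∏ α, (if x α then p α else 1 - p α)|

/-- Total variation distance between the joint law of the indicator family
`(X_α)_{α ∈ I}` of a Mallows(q) random permutation of `[n]` and the joint law of
independent Bernoulli random variables with marginals `p`. -/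
def dTVFamMallows {n : ℕ} (q : ℝ) {I : Type*} [Fintype I] [DecidableEq I]
    (X : Equiv.Perm (Fin n) → I → Prop) (p : I → ℝ) : ℝ :=
  (1 / 2) * ∑ x : I → Bool,
    |mallowsProb q {σ | ∀ α, X σ α ↔ x α = true} - ∏ α, (if x α then p α else 1 - p α)|

/-
Write `n = j + t`, so that `𝔼 W = λ`. The parts of the law of `W` and of the Poisson law that agree
at `0` and `1` give `d_TV ≤ min (1, λ)` and `d_TV ≤ 𝔼[W; W ≥ 2] + λ²`.

If `(j + 1)² ≤ 4tj`, the summand `s = j - 1` of `d₂` alone is at least `λ / 2`: doubling an entry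
of `τ` in place shows `L_{j-1}(τ) ≥ j`. Otherwise `t < j` and `λ ≤ 1`, hence `d₁ = λ²`, and it
remains to see that `𝔼[W; W ≥ 2] ≤ 2 d₂`.

Let `A` be one of several occurrences and `B` an occurrence nearest to `A`. In the pattern formed
on `A ∪ B`, every other occurrence covers together with `A` all `j + k` positions; such an `A` is
called isolated. Distinct isolated occurrences miss disjoint sets of positions, so they are ordered
by the first position they miss. Apart from the first one (respectively the last one) in each
permutation `ρ`, every isolated occurrence `b` has another one `a` before (after) it, and `(ρ, b)`
is determined by a code: the set `e` of the `k` indices at which `a` leaves `b`, and two monotone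
maps `f, g : [k] → {0, …, k}` describing the interleaving of `a` and `b` in position and in value.
Whether `a` comes before or after `b` can be read off `f`, so no code is used twice. If both maps
were adjacent to the diagonal at the same point of `a`, moving one point of `b` there would give an
occurrence too close to `b`; this bounds the number of pairs `(f, g)` by some `V_k`.

Hence the permutations of `[j + k]` contain at most `U_k + C(j,k) V_k / 2` isolated occurrences,
where `U_k ≤ L_{j-k}(τ)` counts those covered by two occurrences. Doubling `k` entries of `τ` shows
`U_k ≥ C(j,k)`, so this is at most `4 U_k + (V_k / 2 - 3) C(j,k)`. The corrections sum to something
nonpositive, because the weights `C(n,j+k) C(j,k) / (j+k)!` decrease at least as fast as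
`1 / (4^k k!)`, whereas `V_2 = 2` and `V_k` grows only like `16^k`.
-/

section

open Finset Function
open Equiv (Perm)

section UniformExpectation

variable {n : ℕ} {X Y : Perm (Fin n) → ℝ}

lemma unifExp_mono (h : ∀ σ, X σ ≤ Y σ) : unifExp X ≤ unifExp Y :=
  div_le_div_of_nonneg_right (sum_le_sum fun σ _ => h σ) (by positivity)

lemma unifExp_nonneg (h : ∀ σ, 0 ≤ X σ) : 0 ≤ unifExp X :=
  div_nonneg (sum_nonneg fun σ _ => h σ) (by positivity)

lemma unifExp_const (c : ℝ) : unifExp (fun _ : Perm (Fin n) => c) = c := by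
  simp [unifExp, Fintype.card_perm, Nat.factorial_ne_zero]

lemma unifExp_sum {ι : Type*} (s : Finset ι) (X : ι → Perm (Fin n) → ℝ) :
    unifExp (fun σ => ∑ i ∈ s, X i σ) = ∑ i ∈ s, unifExp (X i) := by
  simp only [unifExp, sum_div]
  exact sum_comm

lemma unifExp_sub (X Y : Perm (Fin n) → ℝ) :
    unifExp (fun σ => X σ - Y σ) = unifExp X - unifExp Y := by
  simp only [unifExp, sum_sub_distrib, sub_div]

lemma unifProb_setOf (p : Perm (Fin n) → Prop) [DecidablePred p] :
    unifProb {σ | p σ} = unifExp fun σ => if p σ then 1 else 0 := by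
  simp [unifProb, unifExp, Set.ncard_eq_toFinset_card']

end UniformExpectation

section Patterns

lemma perm_eq_of_lt_iff_lt {N : ℕ} {ρ ρ' : Perm (Fin N)}
    (h : ∀ a b, ρ a < ρ b ↔ ρ' a < ρ' b) : ρ = ρ' := by
  have hmono : StrictMono (ρ' ∘ ρ.symm) := fun a b hab => by
    simpa [← h] using hab
  have hid : ρ' ∘ ρ.symm = id :=
    (hmono.range_inj strictMono_id).1 <| by
      rw [(ρ'.surjective.comp ρ.symm.surjective).range_eq, Set.range_id]
  ext a
  simpa using congrArg Fin.val (congrFun hid (ρ a)).symm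

/-- The standardization of a word `key` with distinct letters: the permutation ordering the
positions in the same way as their letters. -/
def standardization {N : ℕ} {X : Type*} [LinearOrder X] (key : Fin N → X) : Perm (Fin N) :=
  (Tuple.sort key)⁻¹

lemma standardization_lt_iff {N : ℕ} {X : Type*} [LinearOrder X] {key : Fin N → X}
    (hkey : Injective key) (a b : Fin N) :
    standardization key a < standardization key b ↔ key a < key b := by
  have hmono : StrictMono (key ∘ Tuple.sort key) :=
    (Tuple.monotone_sort key).strictMono_of_injective (hkey.comp (Tuple.sort key).injective)
  simpa [standardization] using
    (hmono.lt_iff_lt (a := (Tuple.sort key)⁻¹ a) (b := (Tuple.sort key)⁻¹ b)).symm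

variable {m n N : ℕ} {τ : Perm (Fin m)} {σ : Perm (Fin n)}

/-- The pattern formed by `σ` at the positions enumerated by `e`. -/
def patternOn (σ : Perm (Fin n)) (e : Fin N ↪o Fin n) : Perm (Fin N) :=
  standardization (σ ∘ e)

lemma patternOn_lt_iff (σ : Perm (Fin n)) (e : Fin N ↪o Fin n) (a b : Fin N) :
    patternOn σ e a < patternOn σ e b ↔ σ (e a) < σ (e b) :=
  standardization_lt_iff (σ.injective.comp e.injective) a b

lemma patternOn_eq_iff {e : Fin N ↪o Fin n} {ρ : Perm (Fin N)} :
    patternOn σ e = ρ ↔ OccursAt ρ σ e := by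
  refine ⟨?_, fun h => perm_eq_of_lt_iff_lt fun a b => ?_⟩
  · rintro rfl
    exact ⟨e.strictMono, fun a b => (patternOn_lt_iff σ e a b).symm⟩
  · rw [patternOn_lt_iff, h.2]

lemma occursAt_patternOn {e : Fin N ↪o Fin n} {f : Fin m → Fin N} :
    OccursAt τ (patternOn σ e) f ↔ OccursAt τ σ (e ∘ f) := by
  simp only [OccursAt, StrictMono, patternOn_lt_iff, comp_apply, e.lt_iff_lt]

lemma patternOn_mul {e : Fin N ↪o Fin n} {π : Perm (Fin n)} {π' : Perm (Fin N)}
    (h : ∀ a, π (e a) = e (π' a)) : patternOn (σ * π) e = patternOn σ e * π' :=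
  perm_eq_of_lt_iff_lt fun a b => by simp [patternOn_lt_iff, h]

lemma card_patternOn_eq (e : Fin N ↪o Fin n) (ρ : Perm (Fin N)) :
    #{σ : Perm (Fin n) | patternOn σ e = ρ} * N.factorial = n.factorial := by
  have card_le (ρ ρ' : Perm (Fin N)) :
      #{σ : Perm (Fin n) | patternOn σ e = ρ} ≤ #{σ : Perm (Fin n) | patternOn σ e = ρ'} := by
    let π := (ρ⁻¹ * ρ').extendDomain (Equiv.ofInjective e e.injective)
    have hπ (a : Fin N) : π (e a) = e ((ρ⁻¹ * ρ') a) := by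
      simpa using Perm.extendDomain_apply_image (ρ⁻¹ * ρ') (Equiv.ofInjective e e.injective) a
    refine card_le_card_of_injOn (· * π) (fun σ hσ => ?_) (mul_left_injective π).injOn
    simp_all [patternOn_mul hπ]
  have hsum : ∑ ρ', #{σ : Perm (Fin n) | patternOn σ e = ρ'} = n.factorial := by
    rw [← card_eq_sum_card_fiberwise (fun _ _ => mem_coe.2 (mem_univ _)), card_univ,
      Fintype.card_perm, Fintype.card_fin]
  rw [← hsum, sum_congr rfl fun ρ' _ => le_antisymm (card_le ρ' ρ) (card_le ρ ρ')]
  simp [Fintype.card_perm, mul_comm]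

lemma unifExp_patternOn (e : Fin N ↪o Fin n) (F : Perm (Fin N) → ℝ) :
    unifExp (fun σ => F (patternOn σ e)) = unifExp F := by
  have hfiber : ∑ σ : Perm (Fin n), F (patternOn σ e) =
      ∑ ρ, (#{σ : Perm (Fin n) | patternOn σ e = ρ} : ℝ) * F ρ := by
    rw [← sum_fiberwise univ (fun σ => patternOn σ e)]
    refine sum_congr rfl fun ρ _ => ?_
    rw [sum_congr rfl fun σ hσ => by rw [(mem_filter.1 hσ).2], sum_const, nsmul_eq_mul]
  rw [unifExp, unifExp, hfiber, div_eq_div_iff (by positivity) (by positivity), sum_mul, sum_mul]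
  refine sum_congr rfl fun ρ _ => ?_
  rw [← card_patternOn_eq e ρ]
  push_cast
  ring

end Patterns

section Occurrences

variable {m n N : ℕ} {τ : Perm (Fin m)} {σ : Perm (Fin n)}

lemma occursOn_iff_exists_occursAt {α : Finset (Fin n)} :
    OccursOn τ σ α ↔ ∃ f, OccursAt τ σ f ∧ univ.image f = α := by
  simp only [OccursOn, OccursAt]
  grind

lemma OccursAt.occursOn {f : Fin m → Fin n} (h : OccursAt τ σ f) :
    OccursOn τ σ (univ.image f) :=
  occursOn_iff_exists_occursAt.2 ⟨f, h, rfl⟩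

lemma OccursOn.card {α : Finset (Fin n)} (h : OccursOn τ σ α) : #α = m := by
  obtain ⟨f, hf, rfl⟩ := occursOn_iff_exists_occursAt.1 h
  rw [card_image_of_injective _ hf.1.injective, card_univ, Fintype.card_fin]

lemma occursOn_patternOn {e : Fin N ↪o Fin n} {α : Finset (Fin N)} :
    OccursOn τ (patternOn σ e) α ↔ OccursOn τ σ (α.map e.toEmbedding) := by
  simp only [occursOn_iff_exists_occursAt, occursAt_patternOn]
  constructor
  · rintro ⟨f, hf, rfl⟩
    exact ⟨e ∘ f, hf, by ext; simp⟩
  · rintro ⟨g, hg, himage⟩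
    have hrange (x : Fin m) : ∃ y, e y = g x := by
      have hx : g x ∈ α.map e.toEmbedding := himage ▸ mem_image_of_mem g (mem_univ x)
      exact (mem_map.1 hx).imp fun _ => And.right
    choose f hf using hrange
    obtain rfl : e ∘ f = g := funext hf
    exact ⟨f, hg, map_injective e.toEmbedding (by rw [← himage]; ext; simp)⟩

/-- The set of occurrences of `τ` in `σ`, as sets of positions. -/
def occurrences (τ : Perm (Fin m)) (σ : Perm (Fin n)) : Finset (Finset (Fin n)) :=
  {α | OccursOn τ σ α}

lemma mem_occurrences {α : Finset (Fin n)} : α ∈ occurrences τ σ ↔ OccursOn τ σ α := by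
  simp [occurrences]

instance : Fintype (Fin N ↪o Fin n) := Fintype.ofEquiv _ Set.powersetCard.ofFinEmbEquiv.symm

lemma card_fin_orderEmbedding (N n : ℕ) : Fintype.card (Fin N ↪o Fin n) = n.choose N := by
  rw [← Nat.card_eq_fintype_card, Nat.card_congr Set.powersetCard.ofFinEmbEquiv,
    Set.powersetCard.card, Nat.card_fin]

lemma card_occurrences (τ : Perm (Fin m)) (σ : Perm (Fin n)) :
    #(occurrences τ σ) = #{e : Fin m ↪o Fin n | patternOn σ e = τ} := by
  symm
  refine card_bij (fun e _ => univ.map e.toEmbedding) (fun e he => ?_) (fun e _ e' _ h => ?_)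
    fun α hα => ?_
  · have hocc : OccursAt τ σ e := patternOn_eq_iff.1 (mem_filter.1 he).2
    simpa [mem_occurrences, map_eq_image] using hocc.occursOn
  · refine DFunLike.coe_injective ((e.strictMono.range_inj e'.strictMono).1 ?_)
    simpa using congrArg (fun s : Finset (Fin n) => (s : Set (Fin n))) h
  · obtain ⟨f, hf, rfl⟩ := occursOn_iff_exists_occursAt.1 (mem_occurrences.1 hα)
    refine ⟨OrderEmbedding.ofStrictMono f hf.1, ?_, by ext; simp⟩
    simpa [patternOn_eq_iff] using hf

lemma unifExp_card_occurrences (τ : Perm (Fin m)) :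
    unifExp (fun σ : Perm (Fin n) => (#(occurrences τ σ) : ℝ)) =
      n.choose m / m.factorial := by
  have hpattern : unifExp (fun ρ => if ρ = τ then (1 : ℝ) else 0) = 1 / m.factorial := by
    simp [unifExp]
  simp only [card_occurrences, card_filter, Nat.cast_sum, Nat.cast_ite, Nat.cast_one,
    Nat.cast_zero]
  rw [unifExp_sum, sum_congr rfl fun e _ => (unifExp_patternOn e _).trans hpattern, sum_const,
    card_univ, card_fin_orderEmbedding, nsmul_eq_mul, mul_one_div]

end Occurrences

section Isolated

variable {j n N : ℕ} {τ : Perm (Fin j)}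

/-- An occurrence `A` of `τ` in `ρ` is isolated if it is not the only one and every other
occurrence, together with `A`, covers all positions. -/
def IsIsolated (τ : Perm (Fin j)) (ρ : Perm (Fin N)) (A : Finset (Fin N)) : Prop :=
  OccursOn τ ρ A ∧ (∃ B, B ≠ A ∧ OccursOn τ ρ B) ∧
    ∀ B, B ≠ A → OccursOn τ ρ B → A ∪ B = univ

/-- The set of isolated occurrences of `τ` in `ρ`. -/
def isolatedOccurrences (τ : Perm (Fin j)) (ρ : Perm (Fin N)) : Finset (Finset (Fin N)) :=
  {A | IsIsolated τ ρ A}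

/-- The number of isolated occurrences of `τ` in all permutations of length `N` together. -/
def isolatedTotal (τ : Perm (Fin j)) (N : ℕ) : ℕ :=
  ∑ ρ : Perm (Fin N), #(isolatedOccurrences τ ρ)

lemma mem_isolatedOccurrences {ρ : Perm (Fin N)} {A : Finset (Fin N)} :
    A ∈ isolatedOccurrences τ ρ ↔ IsIsolated τ ρ A := by
  simp [isolatedOccurrences]

lemma unifExp_card_isolatedOccurrences (τ : Perm (Fin j)) (N : ℕ) :
    unifExp (fun ρ : Perm (Fin N) => (#(isolatedOccurrences τ ρ) : ℝ)) =
      isolatedTotal τ N / N.factorial := by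
  simp [unifExp, isolatedTotal]

lemma OccursOn.card_union {σ : Perm (Fin n)} {A : Finset (Fin n)} (hA : OccursOn τ σ A)
    (B : Finset (Fin n)) : #(A ∪ B) = j + #(B \ A) := by
  rw [← union_sdiff_self_eq_union, card_union_of_disjoint disjoint_sdiff, hA.card]

lemma OccursOn.card_sdiff_pos {σ : Perm (Fin n)} {A B : Finset (Fin n)} (hA : OccursOn τ σ A)
    (hB : OccursOn τ σ B) (hBA : B ≠ A) : 0 < #(B \ A) := by
  rw [card_pos, sdiff_nonempty]
  exact fun h => hBA (eq_of_subset_of_card_le h (by rw [hA.card, hB.card]))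

-- If `B` is an occurrence nearest to `A`, then `A` is isolated in the pattern on `A ∪ B`.
lemma exists_isIsolated_patternOn {σ : Perm (Fin n)} {A : Finset (Fin n)}
    (hA : OccursOn τ σ A) (hother : ∃ B, B ≠ A ∧ OccursOn τ σ B) :
    ∃ k ∈ Icc 1 (n - j), ∃ e : Fin (j + k) ↪o Fin n, ∃ A' : Finset (Fin (j + k)),
      A'.map e.toEmbedding = A ∧ IsIsolated τ (patternOn σ e) A' := by
  obtain ⟨B, hB, hmin⟩ := ((occurrences τ σ).erase A).exists_min_image (fun B => #(B \ A))
    (hother.imp fun B hB => mem_erase.2 ⟨hB.1, mem_occurrences.2 hB.2⟩)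
  obtain ⟨hBA, hB⟩ := mem_erase.1 hB
  rw [mem_occurrences] at hB
  have hcard := hA.card_union B
  have hle : j + #(B \ A) ≤ n := by simpa [← hcard] using card_le_univ (A ∪ B)
  let e := (A ∪ B).orderEmbOfFin hcard
  have huniv : univ.map e.toEmbedding = A ∪ B := map_orderEmbOfFin_univ _ hcard
  obtain ⟨A', -, hA'⟩ := subset_map_iff.1 (huniv ▸ subset_union_left)
  obtain ⟨B', -, hB'⟩ := subset_map_iff.1 (huniv ▸ subset_union_right)
  refine ⟨_, mem_Icc.2 ⟨hA.card_sdiff_pos hB hBA, by omega⟩, e, A', hA'.symm,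
    occursOn_patternOn.2 (hA' ▸ hA), ⟨B', ?_, occursOn_patternOn.2 (hB' ▸ hB)⟩, fun C hCA hC => ?_⟩
  · rintro rfl
    exact hBA (hB'.trans hA'.symm)
  · rw [occursOn_patternOn] at hC
    have hCA' : C.map e.toEmbedding ≠ A := fun h =>
      hCA (Finset.map_injective _ (h.trans hA'))
    have hnear := hmin _ (mem_erase.2 ⟨hCA', mem_occurrences.2 hC⟩)
    have hcardC : #(A' ∪ C) = #(A ∪ C.map e.toEmbedding) := by
      rw [← card_map e.toEmbedding, map_union, ← hA']
    rw [hA.card_union] at hcardC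
    rw [← card_eq_iff_eq_univ, Fintype.card_fin]
    exact le_antisymm (by simpa using card_le_univ (A' ∪ C)) (by omega)

lemma card_occurrences_le_sum_isolated (τ : Perm (Fin j)) {σ : Perm (Fin n)}
    (h : 2 ≤ #(occurrences τ σ)) :
    #(occurrences τ σ) ≤ ∑ k ∈ Icc 1 (n - j), ∑ e : Fin (j + k) ↪o Fin n,
      #(isolatedOccurrences τ (patternOn σ e)) := by
  have hsubset : occurrences τ σ ⊆ (Icc 1 (n - j)).biUnion fun k => univ.biUnion
      fun e : Fin (j + k) ↪o Fin n =>
        (isolatedOccurrences τ (patternOn σ e)).image (map e.toEmbedding) := by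
    intro A hA
    obtain ⟨B, hB, hBA⟩ := exists_mem_ne h A
    obtain ⟨k, hk, e, A', rfl, hiso⟩ := exists_isIsolated_patternOn (mem_occurrences.1 hA)
      ⟨B, hBA, mem_occurrences.1 hB⟩
    exact mem_biUnion.2 ⟨k, hk, mem_biUnion.2 ⟨e, mem_univ e,
      mem_image_of_mem _ (mem_isolatedOccurrences.2 hiso)⟩⟩
  exact (card_le_card hsubset).trans <| card_biUnion_le.trans <| sum_le_sum fun k _ =>
    card_biUnion_le.trans <| sum_le_sum fun e _ => card_image_le

lemma unifExp_multiple_le_sum_isolatedTotal (n : ℕ) (τ : Perm (Fin j)) :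
    unifExp (fun σ : Perm (Fin n) =>
      if 2 ≤ #(occurrences τ σ) then (#(occurrences τ σ) : ℝ) else 0) ≤
    ∑ k ∈ Icc 1 (n - j),
      (n.choose (j + k) : ℝ) / (j + k).factorial * isolatedTotal τ (j + k) := by
  refine (unifExp_mono (Y := fun σ => ∑ k ∈ Icc 1 (n - j), ∑ e : Fin (j + k) ↪o Fin n,
    (#(isolatedOccurrences τ (patternOn σ e)) : ℝ)) fun σ => ?_).trans_eq ?_
  · split_ifs with h
    · exact_mod_cast card_occurrences_le_sum_isolated τ h
    · positivity
  · simp only [unifExp_sum]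
    refine sum_congr rfl fun k _ => ?_
    have hpattern (e : Fin (j + k) ↪o Fin n) :=
      unifExp_patternOn e fun ρ => (#(isolatedOccurrences τ ρ) : ℝ)
    simp only [hpattern, unifExp_card_isolatedOccurrences, sum_const, card_univ,
      card_fin_orderEmbedding, nsmul_eq_mul]
    ring

end Isolated

section Union

variable {j N : ℕ}

/-- The number of permutations of length `N` in which two occurrences of `τ` cover all
positions. For `N = 2j - s` the two occurrences share exactly `s` positions. -/
def unionCount (τ : Perm (Fin j)) (N : ℕ) : ℕ :=
  #{ρ : Perm (Fin N) | ∃ A B, OccursOn τ ρ A ∧ OccursOn τ ρ B ∧ A ∪ B = univ}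

lemma unionCount_le_overlapCount (τ : Perm (Fin j)) {s : ℕ} (hs : s ≤ 2 * j) :
    unionCount τ (2 * j - s) ≤ overlapCount τ s := by
  rw [overlapCount, Set.ncard_eq_toFinset_card', unionCount]
  refine card_le_card fun ρ hρ => ?_
  obtain ⟨A, B, hA, hB, hAB⟩ := (mem_filter.1 hρ).2
  have hcard := card_union_add_card_inter A B
  rw [hAB, hA.card, hB.card, card_univ, Fintype.card_fin] at hcard
  exact Set.mem_toFinset.2 ⟨A, B, hA.card, hB.card, by omega, hA, hB⟩

end Union

section Interleaving

lemma val_eq_card_lt_add_card_notMem_range {j N : ℕ} {b : Fin j → Fin N} (hb : Injective b)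
    (p : Fin N) : (p : ℕ) = #{s | b s < p} + #{q | q ∉ Set.range b ∧ q < p} := by
  have himage : #{s | b s < p} = #{q | q ∈ Set.range b ∧ q < p} := by
    rw [← card_image_of_injective _ hb]
    congr 1
    ext q
    simp only [mem_image, mem_filter, mem_univ, true_and, Set.mem_range]
    grind
  rw [himage, ← Fin.card_Iio p,
    ← card_filter_add_card_filter_not (s := Iio p) (fun q => q ∈ Set.range b)]
  congr 2 <;> ext <;> simp [and_comm]

lemma strictMono_val_eq_add_card {j N : ℕ} {a : Fin j → Fin N} (ha : StrictMono a) (t : Fin j) :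
    (a t : ℕ) = t + #{q | q ∉ Set.range a ∧ q < a t} := by
  have hlt : #{s | a s < a t} = (t : ℕ) := by
    rw [← Fin.card_Iio]
    congr 1
    ext
    simp [ha.lt_iff_lt]
  rw [val_eq_card_lt_add_card_notMem_range ha.injective (a t), hlt]

lemma monotone_lt_iff_val_lt_card {j N : ℕ} {b : Fin j → Fin N} (hb : Monotone b) (r : Fin j)
    (p : Fin N) : b r < p ↔ (r : ℕ) < #{s | b s < p} := by
  constructor <;> intro h
  · rw [← Nat.succ_le_iff, Nat.succ_eq_add_one, ← Fin.card_Iic r]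
    exact card_le_card fun s hs => by simpa using (hb (mem_Iic.1 hs)).trans_lt h
  · contrapose! h
    rw [← Fin.card_Iio r]
    refine card_le_card fun s hs => mem_Iio.2 ?_
    exact hb.reflect_lt ((mem_filter.1 hs).2.trans_le h)

lemma strictMono_update {α β : Type*} [LinearOrder α] [LinearOrder β] {b : α → β}
    (hb : StrictMono b) {t : α} {p : β} (hp : p ∉ Set.range b)
    (h : ∀ r, r ≠ t → (b r < p ↔ r < t)) : StrictMono (update b t p) := by
  intro r s hrs
  have hne (r : α) : b r ≠ p := fun hr => hp ⟨r, hr⟩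
  rcases eq_or_ne r t with rfl | hr
  · rw [update_self, update_of_ne hrs.ne']
    exact (hne s).symm.lt_of_le (not_lt.1 fun hlt => hrs.not_gt ((h s hrs.ne').1 hlt))
  · rw [update_of_ne hr]
    rcases eq_or_ne s t with rfl | hs
    · simpa using (h r hr).2 hrs
    · simpa [hs] using hb hrs

variable {j k : ℕ}

/-- `a` and `b` enumerate increasingly two `j`-subsets covering `Fin (j + k)`; the indices of
the `k` points that only `a` visits are listed by `e`, and `f x` points that `a` misses precede
`a (e x)`. -/
structure Interleaving (a b : Fin j → Fin (j + k)) (e : Fin k ↪o Fin j)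
    (f : Fin k → Fin (k + 1)) : Prop where
  strictMono_left : StrictMono a
  strictMono_right : StrictMono b
  cover : ∀ p, p ∈ Set.range a ∨ p ∈ Set.range b
  mem_range_iff : ∀ t, t ∈ Set.range e ↔ a t ∉ Set.range b
  val_left : ∀ x, (a (e x) : ℕ) = e x + f x

namespace Interleaving

variable {a a' b b' : Fin j → Fin (j + k)} {e : Fin k ↪o Fin j} {f : Fin k → Fin (k + 1)}

lemma notMem_range_iff (h : Interleaving a b e f) (p : Fin (j + k)) :
    p ∉ Set.range b ↔ ∃ x, a (e x) = p := by
  constructor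
  · intro hp
    obtain ⟨t, rfl⟩ := (h.cover p).resolve_right hp
    obtain ⟨x, rfl⟩ := (h.mem_range_iff t).2 hp
    exact ⟨x, rfl⟩
  · rintro ⟨x, rfl⟩
    exact (h.mem_range_iff _).1 ⟨x, rfl⟩

lemma val_eq_card (h : Interleaving a b e f) (x : Fin k) :
    (f x : ℕ) = #{q | q ∉ Set.range a ∧ q < a (e x)} := by
  have hval := strictMono_val_eq_add_card h.strictMono_left (e x)
  rw [h.val_left] at hval
  omega

lemma monotone (h : Interleaving a b e f) : Monotone f := by
  intro x y hxy
  rw [Fin.le_def, h.val_eq_card, h.val_eq_card]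
  refine card_le_card fun q hq => ?_
  have := h.strictMono_left.monotone (e.monotone hxy)
  simp only [mem_filter, mem_univ, true_and] at hq ⊢
  exact ⟨hq.1, hq.2.trans_le this⟩

lemma right_lt_left_iff (h : Interleaving a b e f) (r : Fin j) (x : Fin k) :
    b r < a (e x) ↔ (r : ℕ) + x < e x + f x := by
  have hmissed : #{q | q ∉ Set.range b ∧ q < a (e x)} = (x : ℕ) := by
    rw [← Fin.card_Iio x, ← card_image_of_injective (Iio x)
      (h.strictMono_left.comp e.strictMono).injective]
    congr 1
    ext q
    simp only [h.notMem_range_iff, mem_filter, mem_univ, true_and, mem_image, mem_Iio, comp_apply]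
    constructor
    · rintro ⟨⟨y, rfl⟩, hy⟩
      exact ⟨y, (h.strictMono_left.comp e.strictMono).lt_iff_lt.1 hy, rfl⟩
    · rintro ⟨y, hy, rfl⟩
      exact ⟨⟨y, rfl⟩, (h.strictMono_left.comp e.strictMono) hy⟩
  have hval := val_eq_card_lt_add_card_notMem_range h.strictMono_right.injective (a (e x))
  rw [monotone_lt_iff_val_lt_card h.strictMono_right.monotone]
  rw [h.val_left, hmissed] at hval
  omega

lemma strictMono_update_right (h : Interleaving a b e f) {x : Fin k}
    (hx : (f x : ℕ) = x ∨ (f x : ℕ) = x + 1) : StrictMono (update b (e x) (a (e x))) := by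
  refine strictMono_update h.strictMono_right ((h.mem_range_iff _).1 ⟨x, rfl⟩) fun r hr => ?_
  rw [h.right_lt_left_iff, Fin.lt_def]
  have := Fin.val_ne_of_ne hr
  omega

lemma left_comp_eq (h : Interleaving a b e f) (h' : Interleaving a' b' e f) (x : Fin k) :
    a (e x) = a' (e x) :=
  Fin.ext <| by rw [h.val_left, h'.val_left]

lemma right_eq (h : Interleaving a b e f) (h' : Interleaving a' b' e f) : b = b' := by
  refine (h.strictMono_right.range_inj h'.strictMono_right).1 (compl_injective ?_)
  ext p
  rw [Set.mem_compl_iff, Set.mem_compl_iff, h.notMem_range_iff, h'.notMem_range_iff]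
  simp only [h.left_comp_eq h']

end Interleaving

lemma card_notMem_range {a : Fin j → Fin (j + k)} (ha : Injective a) :
    #{q | q ∉ Set.range a} = k := by
  have hcompl : ({q | q ∉ Set.range a} : Finset (Fin (j + k))) = (univ.image a)ᶜ := by
    ext
    simp
  rw [hcompl, card_compl, card_image_of_injective _ ha, card_univ, Fintype.card_fin,
    Fintype.card_fin, Nat.add_sub_cancel_left]

lemma exists_interleaving {a b : Fin j → Fin (j + k)} (ha : StrictMono a) (hb : StrictMono b)
    (hcover : ∀ p, p ∈ Set.range a ∨ p ∈ Set.range b) :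
    ∃ e f, Interleaving a b e f := by
  have hcard : #{t | a t ∉ Set.range b} = k := by
    rw [← card_image_of_injective _ ha.injective]
    refine (congrArg card ?_).trans (card_notMem_range hb.injective)
    ext p
    simp only [mem_image, mem_filter, mem_univ, true_and]
    constructor
    · rintro ⟨t, ht, rfl⟩
      exact ht
    · intro hp
      obtain ⟨t, rfl⟩ := (hcover p).resolve_right hp
      exact ⟨t, hp, rfl⟩
  let e := orderEmbOfFin _ hcard
  have hmissed (x : Fin k) : #{q | q ∉ Set.range a ∧ q < a (e x)} < k + 1 := by
    refine Nat.lt_succ_of_le ((card_le_card ?_).trans_eq (card_notMem_range ha.injective))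
    exact monotone_filter_right _ fun _ _ => And.left
  refine ⟨e, fun x => ⟨_, hmissed x⟩, ha, hb, hcover, fun t => ?_, fun x => ?_⟩
  · simp [e]
  · exact strictMono_val_eq_add_card ha (e x)

end Interleaving

namespace Interleaving

variable {j k : ℕ} {a b : Fin j → Fin (j + k)} {e : Fin k ↪o Fin j} {f : Fin k → Fin (k + 1)}

lemma shift_ne_zero (h : Interleaving a b e f) {q : Fin (j + k)} (hq : q ∉ Set.range a)
    (hfirst : ∀ p ∉ Set.range b, q < p) (x : Fin k) : f x ≠ 0 := by
  rw [← Fin.val_ne_zero_iff, h.val_eq_card, ← Nat.pos_iff_ne_zero, card_pos]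
  exact ⟨q, by simpa [hfirst _ ((h.mem_range_iff _).1 ⟨x, rfl⟩)] using hq⟩

lemma exists_shift_eq_zero (h : Interleaving a b e f) {p : Fin (j + k)} (hp : p ∉ Set.range b)
    (hfirst : ∀ q ∉ Set.range a, p < q) : ∃ x, f x = 0 := by
  obtain ⟨x, rfl⟩ := (h.notMem_range_iff p).1 hp
  refine ⟨x, Fin.val_eq_zero_iff.1 ?_⟩
  rw [h.val_eq_card, card_eq_zero, filter_eq_empty_iff]
  exact fun q _ hq => (hfirst q hq.1).not_gt hq.2

end Interleaving

section Codes

variable {j k : ℕ} {τ : Perm (Fin j)} {ρ ρ' : Perm (Fin (j + k))}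
  {a a' b b' : Fin j → Fin (j + k)} {e : Fin k ↪o Fin j} {f g : Fin k → Fin (k + 1)}

lemma occursAt_iff_strictMono {m n : ℕ} {τ : Perm (Fin m)} {σ : Perm (Fin n)}
    {f : Fin m → Fin n} : OccursAt τ σ f ↔ StrictMono f ∧ StrictMono (σ ∘ f ∘ τ.symm) := by
  refine and_congr_right fun _ => ⟨fun h v w hvw => ?_, fun h k l => ?_⟩
  · simpa [h] using hvw
  · simpa using h.lt_iff_lt (a := τ k) (b := τ l)

/-- `(e, f, g)` encodes two occurrences `a`, `b` of `τ` in `ρ` covering all positions: `e` and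
`f` describe how their positions interleave, `g` how their values do. -/
def IsCode (τ : Perm (Fin j)) (ρ : Perm (Fin (j + k))) (a b : Fin j → Fin (j + k))
    (e : Fin k ↪o Fin j) (f g : Fin k → Fin (k + 1)) : Prop :=
  Interleaving a b e f ∧ ∃ e' : Fin k ↪o Fin j,
    Interleaving (ρ ∘ a ∘ τ.symm) (ρ ∘ b ∘ τ.symm) e' g ∧
      ∀ x, e' (patternOn τ e x) = τ (e x)

lemma exists_isCode (ha : OccursAt τ ρ a) (hb : OccursAt τ ρ b)
    (hcover : ∀ p, p ∈ Set.range a ∨ p ∈ Set.range b) : ∃ e f g, IsCode τ ρ a b e f g := by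
  rw [occursAt_iff_strictMono] at ha hb
  obtain ⟨e, f, hef⟩ := exists_interleaving ha.1 hb.1 hcover
  have hrange (p : Fin (j + k)) (c : Fin j → Fin (j + k)) :
      p ∈ Set.range (ρ ∘ c ∘ τ.symm) ↔ ρ.symm p ∈ Set.range c := by
    rw [← comp_assoc, τ.symm.surjective.range_comp, Set.range_comp, ρ.image_eq_preimage_symm]
    rfl
  obtain ⟨e', g, heg⟩ := exists_interleaving ha.2 hb.2 fun p => by
    simpa only [hrange] using hcover (ρ.symm p)
  refine ⟨e, f, g, hef, e', heg, ?_⟩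
  set π := patternOn τ e with hπ
  have hmono : StrictMono (τ ∘ e ∘ π.symm) :=
    (occursAt_iff_strictMono.1 (patternOn_eq_iff.1 hπ.symm)).2
  have hcomp : (e' : Fin k → Fin j) = τ ∘ e ∘ π.symm := by
    refine (e'.strictMono.range_inj hmono).1 (Set.ext fun v => ?_)
    rw [← comp_assoc, π.symm.surjective.range_comp, Set.range_comp, τ.image_eq_preimage_symm,
      Set.mem_preimage, hef.mem_range_iff, heg.mem_range_iff, hrange]
    simp
  intro x
  simp [hcomp]

lemma IsCode.eq_and_eq (h : IsCode τ ρ a b e f g) (h' : IsCode τ ρ' a' b' e f g) :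
    ρ = ρ' ∧ b = b' := by
  obtain ⟨hpos, e', hval, he'⟩ := h
  obtain ⟨hpos', e'', hval', he''⟩ := h'
  obtain rfl : e' = e'' := by
    ext y
    obtain ⟨x, rfl⟩ := (patternOn τ e).surjective y
    rw [he', he'']
  obtain rfl : b = b' := hpos.right_eq hpos'
  refine ⟨Equiv.ext fun p => ?_, rfl⟩
  by_cases hp : p ∈ Set.range b
  · obtain ⟨r, rfl⟩ := hp
    simpa using congrFun (hval.right_eq hval') (τ r)
  · obtain ⟨x, rfl⟩ := (hpos.notMem_range_iff p).1 hp
    have hvalue := hval.left_comp_eq hval' (patternOn τ e x)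
    simpa [he', ← hpos.left_comp_eq hpos' x] using hvalue

/-- The monotone map `f` passes through one of the two cells next to the diagonal in column
`x`. -/
def IsMarked (f : Fin k → Fin (k + 1)) (x : Fin k) : Prop :=
  (f x : ℕ) = x ∨ (f x : ℕ) = x + 1

-- A common mark would allow moving the point `b (e x)` of the occurrence `b` to `a (e x)`.
lemma IsCode.not_isMarked_and_isMarked (h : IsCode τ ρ a b e f g)
    (hiso : IsIsolated τ ρ (univ.image b)) (hk : 2 ≤ k) (x : Fin k) :
    ¬ (IsMarked f x ∧ IsMarked g (patternOn τ e x)) := by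
  rintro ⟨hf, hg⟩
  obtain ⟨hpos, e', hval, he'⟩ := h
  have hmoved : OccursAt τ ρ (update b (e x) (a (e x))) := by
    refine occursAt_iff_strictMono.2 ⟨hpos.strictMono_update_right hf, ?_⟩
    convert hval.strictMono_update_right hg using 1
    rw [he']
    ext v
    by_cases hv : τ.symm v = e x
    · simp [← hv]
    · have hv' : v ≠ τ (e x) := fun h => hv (by simp [h])
      simp [hv, hv']
  have hnew : a (e x) ∉ univ.image b := by simpa using (hpos.mem_range_iff _).1 ⟨x, rfl⟩
  have hne : univ.image (update b (e x) (a (e x))) ≠ univ.image b := fun heq =>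
    hnew (heq ▸ mem_image.2 ⟨e x, mem_univ _, update_self _ _ _⟩)
  have hsubset : univ ⊆ insert (a (e x)) (univ.image b) := by
    rw [← hiso.2.2 _ hne hmoved.occursOn]
    refine union_subset (subset_insert _ _) (image_subset_iff.2 fun r _ => ?_)
    by_cases hr : r = e x <;> simp [hr]
  have hcard := (card_le_card hsubset).trans (card_insert_le _ _)
  rw [hiso.1.card, card_univ, Fintype.card_fin] at hcard
  omega

/-- The pairs `(f, g)` that can occur in a code of an isolated occurrence, when `π` is the
pattern of `τ` at the positions `e` of the code. -/
def codePairs (k : ℕ) (π : Perm (Fin k)) :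
    Finset ((Fin k → Fin (k + 1)) × (Fin k → Fin (k + 1))) :=
  {p | Monotone p.1 ∧ Monotone p.2 ∧
    (2 ≤ k → ∀ x, ¬ (IsMarked p.1 x ∧ IsMarked p.2 (π x)))}

/-- The codes `(e, f, g)` available to isolated occurrences of `τ`. -/
def codeSet (τ : Perm (Fin j)) (k : ℕ) :
    Finset (Σ _ : Fin k ↪o Fin j, (Fin k → Fin (k + 1)) × (Fin k → Fin (k + 1))) :=
  univ.sigma fun e => codePairs k (patternOn τ e)

lemma card_codeSet_le (τ : Perm (Fin j)) {V : ℕ} (hV : ∀ π, #(codePairs k π) ≤ V) :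
    #(codeSet τ k) ≤ j.choose k * V := by
  rw [codeSet, card_sigma, ← card_fin_orderEmbedding, ← card_univ]
  exact sum_le_card_nsmul _ _ _ fun e _ => hV _

lemma IsCode.mem_codeSet (h : IsCode τ ρ a b e f g) (hiso : IsIsolated τ ρ (univ.image b)) :
    (⟨e, f, g⟩ : Σ _ : Fin k ↪o Fin j, _ × _) ∈ codeSet τ k := by
  have hmono := h.2.choose_spec.1.monotone
  simp only [codeSet, mem_sigma, mem_univ, true_and, codePairs, mem_filter]
  exact ⟨h.1.monotone, hmono, fun hk => h.not_isMarked_and_isMarked hiso hk⟩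

end Codes

section CountingIsolated

/-- The elements `x` of `S` with `r y x` for some `y ∈ S`. -/
def preceded {α : Type*} (r : α → α → Prop) (S : Finset α) : Finset α := {x ∈ S | ∃ y ∈ S, r y x}

lemma mem_preceded {α : Type*} {r : α → α → Prop} {S : Finset α} {x : α} :
    x ∈ preceded r S ↔ x ∈ S ∧ ∃ y ∈ S, r y x :=
  mem_filter

lemma card_le_card_preceded_add_one {α β : Type*} [LinearOrder β] {S : Finset α} {key : α → β}
    (hkey : Set.InjOn key S) : #S ≤ #(preceded (fun y x => key y < key x) S) + 1 := by
  rcases S.eq_empty_or_nonempty with rfl | hS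
  · simp
  obtain ⟨x₀, hx₀, hmin⟩ := S.exists_min_image key hS
  rw [← card_erase_add_one hx₀]
  refine Nat.add_le_add_right (card_le_card fun x hx => ?_) 1
  obtain ⟨hne, hx⟩ := mem_erase.1 hx
  exact mem_preceded.2 ⟨hx, x₀, hx₀, (hmin x hx).lt_of_ne fun h => hne (hkey hx hx₀ h.symm)⟩

variable {j k : ℕ}

/-- The first position outside `A`, or `⊤` if there is none. -/
def firstMissing {N : ℕ} (A : Finset (Fin N)) : WithTop (Fin N) := Aᶜ.min

lemma exists_firstMissing_eq {τ : Perm (Fin j)} {ρ : Perm (Fin (j + k))}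
    {A : Finset (Fin (j + k))} (hk : 1 ≤ k) (hA : OccursOn τ ρ A) :
    ∃ q ∉ A, firstMissing A = q := by
  have hne : Aᶜ.Nonempty := by
    rw [← card_pos, card_compl, hA.card, Fintype.card_fin]
    omega
  obtain ⟨q, hq⟩ := min_of_nonempty hne
  exact ⟨q, mem_compl.1 (mem_of_min hq), hq⟩

lemma firstMissing_le {N : ℕ} {A : Finset (Fin N)} {q : Fin N} (hq : q ∉ A) :
    firstMissing A ≤ q :=
  min_le (mem_compl.2 hq)

lemma firstMissing_injOn (hk : 1 ≤ k) (τ : Perm (Fin j)) (ρ : Perm (Fin (j + k))) :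
    Set.InjOn firstMissing (isolatedOccurrences τ ρ : Set (Finset (Fin (j + k)))) := by
  intro A hA B hB h
  rw [mem_coe, mem_isolatedOccurrences] at hA hB
  by_contra hne
  obtain ⟨q, hqA, hq⟩ := exists_firstMissing_eq hk hA.1
  obtain ⟨p, hpB, hp⟩ := exists_firstMissing_eq hk hB.1
  obtain rfl : q = p := WithTop.coe_injective (hq.symm.trans (h.trans hp))
  have hmem : q ∈ A ∪ B := hA.2.2 B (Ne.symm hne) hB.1 ▸ mem_univ q
  simp [hqA, hpB] at hmem

/-- The pairs `(ρ, B)` such that `B` is an isolated occurrence of `τ` in `ρ`, preceded in the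
sense of `r` by another one. -/
def precededOccurrences (τ : Perm (Fin j)) (k : ℕ)
    (r : Finset (Fin (j + k)) → Finset (Fin (j + k)) → Prop) :
    Finset (Σ _ : Perm (Fin (j + k)), Finset (Fin (j + k))) :=
  univ.sigma fun ρ => preceded r (isolatedOccurrences τ ρ)

lemma card_precededOccurrences_le (τ : Perm (Fin j))
    {r : Finset (Fin (j + k)) → Finset (Fin (j + k)) → Prop}
    {q : (Fin k → Fin (k + 1)) → Prop} [DecidablePred q] (hr : ∀ A, ¬ r A A)
    (hq : ∀ (ρ : Perm (Fin (j + k))) a b e f, OccursAt τ ρ a → OccursAt τ ρ b →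
      Interleaving a b e f → r (univ.image a) (univ.image b) → q f) :
    #(precededOccurrences τ k r) ≤ #{c ∈ codeSet τ k | q c.2.1} := by
  refine card_le_card_of_forall_subsingleton
    (fun p c => ∃ a b, univ.image b = p.2 ∧ IsCode τ p.1 a b c.1 c.2.1 c.2.2) ?_ ?_
  · rintro ⟨ρ, B⟩ hB
    simp only [precededOccurrences, mem_sigma, mem_univ, true_and, mem_preceded,
      mem_isolatedOccurrences] at hB
    obtain ⟨hB, A, hA, hAB⟩ := hB
    have hcover := hA.2.2 B (fun h => hr A (h ▸ hAB)) hB.1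
    obtain ⟨a, ha, rfl⟩ := occursOn_iff_exists_occursAt.1 hA.1
    obtain ⟨b, hb, rfl⟩ := occursOn_iff_exists_occursAt.1 hB.1
    obtain ⟨e, f, g, hcode⟩ := exists_isCode ha hb fun p => by
      have hmem : p ∈ univ.image a ∪ univ.image b := hcover ▸ mem_univ p
      simpa using hmem
    exact ⟨⟨e, f, g⟩, mem_filter.2 ⟨hcode.mem_codeSet hB, hq ρ a b e f ha hb hcode.1 hAB⟩,
      a, b, rfl, hcode⟩
  · rintro ⟨e, f, g⟩ - ⟨ρ, B⟩ ⟨-, a, b, rfl, h⟩ ⟨ρ', B'⟩ ⟨-, a', b', rfl, h'⟩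
    obtain ⟨rfl, rfl⟩ := h.eq_and_eq h'
    rfl

lemma card_precededOccurrences_lt_le (hk : 1 ≤ k) (τ : Perm (Fin j)) :
    #(precededOccurrences τ k fun A B => firstMissing A < firstMissing B) ≤
      #{c ∈ codeSet τ k | ∀ x, c.2.1 x ≠ 0} := by
  refine card_precededOccurrences_le (q := fun f => ∀ x, f x ≠ 0) τ (fun A => lt_irrefl _)
    fun ρ a b e f ha _ h hlt => ?_
  obtain ⟨q, hqa, hq⟩ := exists_firstMissing_eq hk ha.occursOn
  refine h.shift_ne_zero (q := q) (by simpa using hqa) fun p hp => ?_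
  exact WithTop.coe_lt_coe.1 <| hq ▸ hlt.trans_le (firstMissing_le (by simpa using hp))

lemma card_precededOccurrences_gt_le (hk : 1 ≤ k) (τ : Perm (Fin j)) :
    #(precededOccurrences τ k fun A B => firstMissing B < firstMissing A) ≤
      #{c ∈ codeSet τ k | ¬ ∀ x, c.2.1 x ≠ 0} := by
  refine card_precededOccurrences_le (q := fun f => ¬ ∀ x, f x ≠ 0) τ (fun A => lt_irrefl _)
    fun ρ a b e f _ hb h hlt => ?_
  obtain ⟨p, hpb, hp⟩ := exists_firstMissing_eq hk hb.occursOn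
  push Not
  refine h.exists_shift_eq_zero (p := p) (by simpa using hpb) fun q hq => ?_
  exact WithTop.coe_lt_coe.1 <| hp ▸ hlt.trans_le (firstMissing_le (by simpa using hq))

lemma two_mul_card_isolatedOccurrences_le (hk : 1 ≤ k) (τ : Perm (Fin j))
    (ρ : Perm (Fin (j + k))) :
    2 * #(isolatedOccurrences τ ρ) ≤
      2 * (if ∃ A B, OccursOn τ ρ A ∧ OccursOn τ ρ B ∧ A ∪ B = univ then 1 else 0) +
      #(preceded (fun A B => firstMissing A < firstMissing B) (isolatedOccurrences τ ρ)) +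
      #(preceded (fun A B => firstMissing B < firstMissing A) (isolatedOccurrences τ ρ)) := by
  rcases (isolatedOccurrences τ ρ).eq_empty_or_nonempty with hS | ⟨A, hA⟩
  · simp [hS]
  obtain ⟨hA, ⟨B, hBA, hB⟩, hcover⟩ := mem_isolatedOccurrences.1 hA
  rw [if_pos ⟨A, B, hA, hB, hcover B hBA hB⟩]
  have hinj := firstMissing_injOn hk τ ρ
  have hlt := card_le_card_preceded_add_one hinj
  have hgt := card_le_card_preceded_add_one (OrderDual.toDual.injective.comp_injOn hinj)
  simp only [comp_apply, OrderDual.toDual_lt_toDual] at hgt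
  omega

lemma two_mul_isolatedTotal_le (hk : 1 ≤ k) (τ : Perm (Fin j)) {V : ℕ}
    (hV : ∀ π, #(codePairs k π) ≤ V) :
    2 * isolatedTotal τ (j + k) ≤ 2 * unionCount τ (j + k) + j.choose k * V := by
  have hsum := sum_le_sum fun ρ (_ : ρ ∈ univ) => two_mul_card_isolatedOccurrences_le hk τ ρ
  have hlt := card_precededOccurrences_lt_le hk τ
  have hgt := card_precededOccurrences_gt_le hk τ
  have hcodes := (card_filter_add_card_filter_not fun c => ∀ x, c.2.1 x ≠ 0).trans_le
    (card_codeSet_le τ hV)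
  simp only [precededOccurrences, card_sigma] at hlt hgt
  rw [← mul_sum, sum_add_distrib, sum_add_distrib, ← mul_sum, ← card_filter] at hsum
  rw [isolatedTotal, unionCount]
  omega

end CountingIsolated

section Doubling

variable {j k : ℕ} {τ : Perm (Fin j)} {P P' : Finset (Fin j)}

/-- The positions of `Fin j`, those in `P` taken twice, in increasing order. -/
def doubled (P : Finset (Fin j)) : Finset (Fin j ×ₗ Bool) :=
  {u | (ofLex u).2 = true → (ofLex u).1 ∈ P}

lemma toLex_mem_doubled {r : Fin j} {c : Bool} :
    toLex (r, c) ∈ doubled P ↔ (c = true → r ∈ P) := by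
  simp [doubled]

lemma card_doubled (hP : #P = k) : #(doubled P) = j + k := by
  have hsplit : doubled P =
      univ.image (fun r => toLex (r, false)) ∪ P.image (fun r => toLex (r, true)) := by
    ext u
    obtain ⟨⟨r, _ | _⟩, rfl⟩ := toLex.surjective u <;> simp [toLex_mem_doubled]
  rw [hsplit, card_union_of_disjoint, card_image_of_injective, card_image_of_injective, card_univ,
    Fintype.card_fin, hP]
  · exact fun r s h => by simpa using h
  · exact fun r s h => by simpa using h
  · simp [disjoint_left]

/-- Position `x` of the doubled sequence is copy `(doubledEmb hP x).2` of the original position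
`(doubledEmb hP x).1`. -/
def doubledEmb (hP : #P = k) : Fin (j + k) ↪o Fin j ×ₗ Bool :=
  (doubled P).orderEmbOfFin (card_doubled hP)

lemma mem_range_doubledEmb (hP : #P = k) {u : Fin j ×ₗ Bool} :
    u ∈ Set.range (doubledEmb hP) ↔ u ∈ doubled P := by
  simp [doubledEmb]

lemma exists_doubledEmb_eq_false (hP : #P = k) (r : Fin j) :
    ∃ y, doubledEmb hP y = toLex (r, false) :=
  (mem_range_doubledEmb hP).2 (toLex_mem_doubled.2 (by simp))

/-- `τ` has an ascent at `r`. -/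
def IsAscent (τ : Perm (Fin j)) (r : Fin j) : Prop :=
  ∃ s : Fin j, (s : ℕ) = r + 1 ∧ τ r < τ s

/-- The values of the two copies of `r` are adjacent, and ordered oppositely to
`τ r` and `τ (r + 1)`. -/
def doubledKey (τ : Perm (Fin j)) (u : Fin j ×ₗ Bool) : Fin j ×ₗ Bool :=
  toLex (τ (ofLex u).1, xor (ofLex u).2 (decide (IsAscent τ (ofLex u).1)))

lemma doubledKey_injective (τ : Perm (Fin j)) : Injective (doubledKey τ) := by
  intro u v h
  obtain ⟨⟨r, c⟩, rfl⟩ := toLex.surjective u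
  obtain ⟨⟨s, d⟩, rfl⟩ := toLex.surjective v
  simp only [doubledKey, ofLex_toLex, toLex_inj, Prod.mk.injEq, τ.injective.eq_iff] at h
  obtain ⟨rfl, h⟩ := h
  rw [Bool.xor_left_inj.1 h]

/-- The permutation obtained from `τ` by doubling the entries at the positions in `P`. -/
def doubledPerm (τ : Perm (Fin j)) (hP : #P = k) : Perm (Fin (j + k)) :=
  standardization (doubledKey τ ∘ doubledEmb hP)

lemma doubledPerm_lt_iff (hP : #P = k) (x y : Fin (j + k)) :
    doubledPerm τ hP x < doubledPerm τ hP y ↔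
      doubledKey τ (doubledEmb hP x) < doubledKey τ (doubledEmb hP y) :=
  standardization_lt_iff ((doubledKey_injective τ).comp (doubledEmb hP).injective) x y

lemma doubledKey_lt_iff_of_ne {r s : Fin j} (hrs : r ≠ s) (c d : Bool) :
    doubledKey τ (toLex (r, c)) < doubledKey τ (toLex (s, d)) ↔ τ r < τ s := by
  simp [doubledKey, Prod.Lex.toLex_lt_toLex, hrs]

lemma doubledKey_lt_iff_not_isAscent (r : Fin j) :
    doubledKey τ (toLex (r, false)) < doubledKey τ (toLex (r, true)) ↔ ¬ IsAscent τ r := by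
  by_cases h : IsAscent τ r <;> simp [doubledKey, Prod.Lex.toLex_lt_toLex, h]

lemma exists_occursAt_doubledPerm (τ : Perm (Fin j)) (hP : #P = k) (c : Fin j → Bool)
    (hc : ∀ r, c r = true → r ∈ P) :
    ∃ f, OccursAt τ (doubledPerm τ hP) f ∧ ∀ r, doubledEmb hP (f r) = toLex (r, c r) := by
  have hmem (r : Fin j) : toLex (r, c r) ∈ Set.range (doubledEmb hP) :=
    (mem_range_doubledEmb hP).2 (toLex_mem_doubled.2 (hc r))
  choose f hf using hmem
  refine ⟨f, ⟨fun r s hrs => ?_, fun r s => ?_⟩, hf⟩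
  · rw [← (doubledEmb hP).lt_iff_lt, hf, hf, Prod.Lex.toLex_lt_toLex]
    exact Or.inl hrs
  · rw [doubledPerm_lt_iff, hf, hf]
    rcases eq_or_ne r s with rfl | hrs
    · simp
    · exact doubledKey_lt_iff_of_ne hrs _ _

lemma exists_union_eq_univ_doubledPerm (τ : Perm (Fin j)) (hP : #P = k) :
    ∃ A B, OccursOn τ (doubledPerm τ hP) A ∧ OccursOn τ (doubledPerm τ hP) B ∧
      A ∪ B = univ := by
  obtain ⟨a, ha, hae⟩ := exists_occursAt_doubledPerm τ hP (fun _ => false) (by simp)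
  obtain ⟨b, hb, hbe⟩ := exists_occursAt_doubledPerm τ hP (fun r => decide (r ∈ P)) (by simp)
  refine ⟨_, _, ha.occursOn, hb.occursOn, eq_univ_iff_forall.2 fun x => ?_⟩
  simp only [mem_union, mem_image, mem_univ, true_and]
  have hx : doubledEmb hP x ∈ doubled P := (mem_range_doubledEmb hP).1 ⟨x, rfl⟩
  obtain ⟨⟨r, c⟩, hrc⟩ := toLex.surjective (doubledEmb hP x)
  rw [← hrc, toLex_mem_doubled] at hx
  cases c with
  | false => exact .inl ⟨r, (doubledEmb hP).injective (by rw [hae, hrc])⟩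
  | true => exact .inr ⟨r, (doubledEmb hP).injective (by simp [hbe, ← hrc, hx])⟩

lemma exists_eq_of_doubledEmb_lt (hP : #P = k) (hP' : #P' = k) {x : Fin (j + k)}
    (hbelow : ∀ y < x, doubledEmb hP y = doubledEmb hP' y)
    (hlt : doubledEmb hP x < doubledEmb hP' x) :
    ∃ (r s : Fin j) (y : Fin (j + k)), (s : ℕ) = r + 1 ∧ y < x ∧
      doubledEmb hP y = toLex (r, false) ∧ doubledEmb hP x = toLex (r, true) ∧
      doubledEmb hP' x = toLex (s, false) := by
  have hx : doubledEmb hP x ∉ doubled P' := by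
    rw [← mem_range_doubledEmb hP']
    rintro ⟨y, hy⟩
    rcases lt_or_ge y x with hyx | hyx
    · exact hyx.ne ((doubledEmb hP).injective ((hbelow y hyx).trans hy))
    · exact hlt.not_ge (hy ▸ (doubledEmb hP').monotone hyx)
  obtain ⟨⟨r, c⟩, hr⟩ := toLex.surjective (doubledEmb hP x)
  obtain ⟨⟨q, d⟩, hq⟩ := toLex.surjective (doubledEmb hP' x)
  obtain ⟨rfl, -⟩ : c = true ∧ r ∉ P' := by
    simpa [← hr, toLex_mem_doubled] using hx
  obtain ⟨y, hy⟩ := exists_doubledEmb_eq_false hP r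
  have hrq : r < q := by
    simpa [← hr, ← hq, Prod.Lex.toLex_lt_toLex, Bool.lt_iff] using hlt
  obtain ⟨z, hz⟩ := exists_doubledEmb_eq_false hP' ⟨r + 1, by omega⟩
  have hxz : x ≤ z := by
    by_contra! hzx
    have hlt' := (doubledEmb hP).strictMono hzx
    rw [hbelow z hzx, hz, ← hr, Prod.Lex.toLex_lt_toLex] at hlt'
    simp only [Fin.lt_def, Fin.ext_iff] at hlt'
    omega
  have hle := (doubledEmb hP').monotone hxz
  rw [hz, ← hq, Prod.Lex.toLex_le_toLex] at hle
  simp only [Fin.lt_def, Fin.ext_iff] at hle hrq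
  have hqr : (q : ℕ) = r + 1 := by omega
  have hd : d = false := le_bot_iff.1 (by simpa [hqr] using hle)
  refine ⟨r, q, y, hqr, ?_, hy, hr.symm, by rw [← hq, hd]⟩
  rw [← (doubledEmb hP).lt_iff_lt, hy, ← hr, Prod.Lex.toLex_lt_toLex]
  simp

lemma doubledEmb_le_of_forall_lt_eq (hP : #P = k) (hP' : #P' = k) {x : Fin (j + k)}
    (hbelow : ∀ y < x, doubledEmb hP y = doubledEmb hP' y)
    (heq : doubledPerm τ hP = doubledPerm τ hP') :
    doubledEmb hP' x ≤ doubledEmb hP x := by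
  by_contra! hlt
  obtain ⟨r, s, y, hs, hyx, hy, hx, hx'⟩ := exists_eq_of_doubledEmb_lt hP hP' hbelow hlt
  have hrs : r ≠ s := fun h => by simp [h] at hs
  have hascent : IsAscent τ r ↔ τ r < τ s :=
    ⟨fun ⟨s', hs', h⟩ => by rwa [Fin.ext (hs.trans hs'.symm)], fun h => ⟨s, hs, h⟩⟩
  have hiff := doubledPerm_lt_iff hP (τ := τ) y x
  rw [heq, doubledPerm_lt_iff, ← hbelow y hyx, hx', hy, hx, doubledKey_lt_iff_of_ne hrs,
    doubledKey_lt_iff_not_isAscent, hascent] at hiff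
  exact iff_not_self hiff

lemma doubledPerm_injective (hP : #P = k) (hP' : #P' = k)
    (heq : doubledPerm τ hP = doubledPerm τ hP') : P = P' := by
  have hemb : doubledEmb hP = doubledEmb hP' := by
    refine DFunLike.ext _ _ fun x => ?_
    induction x using WellFoundedLT.induction with
    | ind x ih =>
      exact le_antisymm
        (doubledEmb_le_of_forall_lt_eq hP' hP (fun y hy => (ih y hy).symm) heq.symm)
        (doubledEmb_le_of_forall_lt_eq hP hP' ih heq)
  ext r
  have hmem := mem_range_doubledEmb hP (u := toLex (r, true))
  rw [hemb, mem_range_doubledEmb, toLex_mem_doubled, toLex_mem_doubled] at hmem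
  simpa using hmem.symm

lemma choose_le_unionCount (τ : Perm (Fin j)) (k : ℕ) : j.choose k ≤ unionCount τ (j + k) := by
  have hcard : #(powersetCard k (univ : Finset (Fin j))) = j.choose k := by simp
  rw [← hcard, ← card_attach]
  exact card_le_card_of_injOn (fun P => doubledPerm τ (mem_powersetCard.1 P.2).2)
    (fun P _ => mem_filter.2 ⟨mem_univ _, exists_union_eq_univ_doubledPerm τ _⟩)
    fun P _ P' _ h => Subtype.ext (doubledPerm_injective _ _ h)

end Doubling

section PathCount

variable {k l m K : ℕ}

/-- The number of weakly increasing sequences `f 0 ≤ ⋯ ≤ f (l - 1) ≤ m` of natural numbers with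
`p x (f x)` for all `x < l`, computed by removing the last term. -/
def pathCount (p : ℕ → ℕ → Prop) [∀ x v, Decidable (p x v)] : ℕ → ℕ → ℕ
  | 0, _ => 1
  | l + 1, m => ∑ v ∈ range (m + 1), if p l v then pathCount p l v else 0

lemma card_monotone_le_pathCount (p : ℕ → ℕ → Prop) [∀ x v, Decidable (p x v)] (hm : m ≤ K) :
    #{f : Fin l → Fin (K + 1) | Monotone f ∧ (∀ x, (f x : ℕ) ≤ m) ∧ ∀ x : Fin l, p x (f x)} ≤
      pathCount p l m := by
  induction l generalizing m with
  | zero => exact card_le_one_of_subsingleton _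
  | succ l ih =>
    rw [card_eq_sum_card_fiberwise (f := fun f => (f (Fin.last l) : ℕ)) (t := range (m + 1))
      fun f hf => by simpa [Nat.lt_succ_iff] using (mem_filter.1 hf).2.2.1 (Fin.last l)]
    refine sum_le_sum fun v hv => ?_
    split_ifs with hp
    · refine le_trans ?_ (ih ((mem_range_succ_iff.1 hv).trans hm))
      refine card_le_card_of_injOn Fin.init (fun f hf => ?_) fun f hf g hg hfg => ?_
      · simp only [coe_filter, mem_filter, mem_univ, true_and, Set.mem_ofPred_eq] at hf ⊢
        obtain ⟨⟨hmono, -, hpf⟩, rfl⟩ := hf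
        exact ⟨fun x y hxy => hmono (Fin.castSucc_le_castSucc_iff.2 hxy),
          fun x => hmono (Fin.le_last _), fun x => hpf x.castSucc⟩
      · simp only [coe_filter, mem_filter, Set.mem_ofPred_eq] at hf hg
        rw [← Fin.snoc_init_self f, ← Fin.snoc_init_self g, hfg, Fin.ext (hf.2.trans hg.2.symm)]
    · rw [Nat.le_zero, card_eq_zero, eq_empty_iff_forall_notMem]
      intro f hf
      simp only [mem_filter, mem_univ, true_and] at hf
      exact hp (hf.2 ▸ hf.1.2.2 (Fin.last l))

lemma pathCount_true (l m : ℕ) : pathCount (fun _ _ => True) l m = (m + l).choose l := by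
  induction l generalizing m with
  | zero => simp [pathCount]
  | succ l ih => simp only [pathCount, ih, if_true, Nat.sum_range_add_choose, add_assoc]

lemma card_monotone_le_choose (k : ℕ) :
    #{f : Fin k → Fin (k + 1) | Monotone f} ≤ (2 * k).choose k := by
  rw [two_mul, ← pathCount_true]
  refine (card_le_card fun f hf => ?_).trans (card_monotone_le_pathCount _ le_rfl)
  simpa [Fin.is_le] using hf

lemma card_codePairs_le_choose_sq (π : Perm (Fin k)) :
    #(codePairs k π) ≤ (2 * k).choose k ^ 2 := by
  rw [sq]
  refine le_trans ?_ (Nat.mul_le_mul (card_monotone_le_choose k) (card_monotone_le_choose k))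
  rw [← card_product]
  refine card_le_card fun p hp => ?_
  simp only [codePairs, mem_filter, mem_univ, true_and] at hp
  simp [hp.1, hp.2.1]

/-- The set of marks of `f`, as a set of natural numbers. -/
def markSet (f : Fin k → Fin (k + 1)) : Finset ℕ :=
  image Fin.val {x | IsMarked f x}

lemma val_mem_markSet {f : Fin k → Fin (k + 1)} {x : Fin k} :
    (x : ℕ) ∈ markSet f ↔ IsMarked f x := by
  simp [markSet, Fin.val_inj]

lemma markSet_subset_range (f : Fin k → Fin (k + 1)) : markSet f ⊆ range k := by
  simp [markSet, subset_iff]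

lemma card_markSet_eq_le (S : Finset ℕ) :
    #{f : Fin k → Fin (k + 1) | Monotone f ∧ markSet f = S} ≤
      pathCount (fun x v => v = x ∨ v = x + 1 ↔ x ∈ S) k k := by
  refine (card_le_card fun f hf => ?_).trans (card_monotone_le_pathCount _ le_rfl)
  simp only [mem_filter, mem_univ, true_and] at hf ⊢
  obtain ⟨hmono, rfl⟩ := hf
  exact ⟨hmono, fun x => Fin.is_le _, fun x => val_mem_markSet.symm⟩

/-- The largest number of monotone maps avoiding marks on a set of `m` indices. -/
def maxUnmarked (k m : ℕ) : ℕ :=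
  (powersetCard m (range k)).sup fun X =>
    pathCount (fun x v => x ∈ X → ¬ (v = x ∨ v = x + 1)) k k

lemma card_unmarked_le_maxUnmarked (X : Finset (Fin k)) :
    #{g : Fin k → Fin (k + 1) | Monotone g ∧ ∀ x ∈ X, ¬ IsMarked g x} ≤ maxUnmarked k #X := by
  have hX : X.map Fin.valEmbedding ∈ powersetCard #X (range k) := by
    simp [mem_powersetCard, subset_iff]
  refine le_trans ?_ (le_sup (f := fun X : Finset ℕ =>
    pathCount (fun x v => x ∈ X → ¬ (v = x ∨ v = x + 1)) k k) hX)
  refine (card_le_card fun g hg => ?_).trans (card_monotone_le_pathCount _ le_rfl)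
  simp only [mem_filter, mem_univ, true_and] at hg ⊢
  refine ⟨hg.1, fun x => Fin.is_le _, fun x hx => hg.2 x ?_⟩
  simpa [Fin.val_inj] using hx

/-- An upper bound for `#(codePairs k π)` that does not depend on `π`: a sum over the number `m`
of marks of the first component. -/
def markBound (k : ℕ) : ℕ :=
  ∑ m ∈ range (k + 1),
    (∑ S ∈ powersetCard m (range k), pathCount (fun x v => v = x ∨ v = x + 1 ↔ x ∈ S) k k) *
      maxUnmarked k m

lemma card_codePairs_fiber_le (hk : 2 ≤ k) (π : Perm (Fin k)) (f : Fin k → Fin (k + 1)) :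
    #{p ∈ codePairs k π | p.1 = f} ≤ maxUnmarked k #(markSet f) := by
  have hcard : #(markSet f) = #(univ.filter (IsMarked f) |>.map π.toEmbedding) := by
    rw [markSet, card_image_of_injective _ Fin.val_injective, card_map]
  rw [hcard]
  refine le_trans ?_ (card_unmarked_le_maxUnmarked _)
  refine card_le_card_of_injOn Prod.snd (fun p hp => ?_) fun p hp q hq hpq => ?_
  · simp only [codePairs, coe_filter, mem_filter, mem_univ, true_and, Set.mem_ofPred_eq] at hp ⊢
    obtain ⟨⟨-, hmono, hmark⟩, rfl⟩ := hp
    refine ⟨hmono, fun y hy hgy => ?_⟩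
    obtain ⟨x, hx, rfl⟩ := Finset.mem_map.1 hy
    exact hmark hk x ⟨(mem_filter.1 hx).2, hgy⟩
  · simp only [coe_filter, Set.mem_ofPred_eq] at hp hq
    exact Prod.ext (hp.2.trans hq.2.symm) hpq

lemma card_codePairs_le_markBound (hk : 2 ≤ k) (π : Perm (Fin k)) :
    #(codePairs k π) ≤ markBound k := by
  have hmono : ∀ p ∈ codePairs k π, p.1 ∈ ({f | Monotone f} : Finset (Fin k → Fin (k + 1))) :=
    fun p hp => by simpa using (mem_filter.1 hp).2.1
  have hmarks : ∀ f ∈ ({f | Monotone f} : Finset (Fin k → Fin (k + 1))),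
      markSet f ∈ (range k).powerset := fun f _ => mem_powerset.2 (markSet_subset_range f)
  calc #(codePairs k π)
      = ∑ f with Monotone f, #{p ∈ codePairs k π | p.1 = f} := card_eq_sum_card_fiberwise hmono
    _ ≤ ∑ f with Monotone f, maxUnmarked k #(markSet f) :=
        sum_le_sum fun f _ => card_codePairs_fiber_le hk π f
    _ = ∑ S ∈ (range k).powerset,
          #{f : Fin k → Fin (k + 1) | Monotone f ∧ markSet f = S} * maxUnmarked k #S := by
        rw [← sum_fiberwise_of_maps_to hmarks]
        refine sum_congr rfl fun S _ => ?_
        rw [filter_filter, ← smul_eq_mul, ← sum_const]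
        exact sum_congr rfl fun f hf => by rw [(mem_filter.1 hf).2.2]
    _ ≤ ∑ S ∈ (range k).powerset,
          pathCount (fun x v => v = x ∨ v = x + 1 ↔ x ∈ S) k k * maxUnmarked k #S :=
        sum_le_sum fun S _ => Nat.mul_le_mul_right _ (card_markSet_eq_le S)
    _ = markBound k := by
        rw [sum_powerset, card_range, markBound]
        refine sum_congr rfl fun m _ => ?_
        rw [sum_mul]
        exact sum_congr rfl fun S hS => by rw [(mem_powersetCard.1 hS).2]

/-- Numerical bounds for `#(codePairs k π)`; those for `2 ≤ k ≤ 7` are the values of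
`markBound`. -/
def codePairBound : ℕ → ℕ
  | 2 => 2
  | 3 => 48
  | 4 => 820
  | 5 => 12928
  | 6 => 197512
  | 7 => 2986368
  | k => (2 * k).choose k ^ 2

lemma codePairBound_of_eight_le (hk : 8 ≤ k) : codePairBound k = (2 * k).choose k ^ 2 := by
  unfold codePairBound
  split <;> first | rfl | omega

lemma card_codePairs_le_codePairBound (k : ℕ) (π : Perm (Fin k)) :
    #(codePairs k π) ≤ codePairBound k := by
  by_cases hk : k ∈ Icc 2 7
  · have hbound : ∀ k ∈ Icc 2 7, markBound k = codePairBound k := by decide +kernel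
    rw [← hbound k hk]
    exact card_codePairs_le_markBound (mem_Icc.1 hk).1 π
  · refine (card_codePairs_le_choose_sq π).trans_eq ?_
    unfold codePairBound
    split <;> first | rfl | simp at hk

end PathCount

section TotalVariation

lemma half_tsum_abs_sub_le {p q m : ℕ → ℝ} {c : ℝ} (hp : HasSum p 1) (hq : HasSum q 1)
    (hm : HasSum m c) (hmp : ∀ k, m k ≤ p k) (hmq : ∀ k, m k ≤ q k) :
    1 / 2 * ∑' k, |p k - q k| ≤ 1 - c := by
  have hbound : HasSum (fun k => p k + q k - 2 * m k) (1 + 1 - 2 * c) :=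
    (hp.add hq).sub (hm.mul_left 2)
  have hle (k : ℕ) : |p k - q k| ≤ p k + q k - 2 * m k := by
    rw [abs_le]
    constructor <;> linarith [hmp k, hmq k]
  have hsum := (hp.summable.sub hq.summable).abs.tsum_le_tsum hle hbound.summable
  rw [hbound.tsum_eq] at hsum
  linarith

lemma hasSum_poissonPMF (l : ℝ) : HasSum (poissonPMF l) 1 := by
  have h := (NormedSpace.expSeries_div_hasSum_exp l).mul_left (Real.exp (-l))
  rw [← Real.exp_eq_exp_ℝ, ← Real.exp_add, neg_add_cancel, Real.exp_zero] at h
  exact h.congr_fun fun k => mul_div_assoc ..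

variable {l : ℝ}

lemma poissonPMF_nonneg (hl : 0 ≤ l) (k : ℕ) : 0 ≤ poissonPMF l k := by
  unfold poissonPMF; positivity

lemma one_sub_le_poissonPMF_zero (l : ℝ) : 1 - l ≤ poissonPMF l 0 := by
  simpa [poissonPMF] using Real.one_sub_le_exp_neg l

lemma one_sub_mul_le_poissonPMF_one (hl : 0 ≤ l) : (1 - l) * l ≤ poissonPMF l 1 := by
  simpa [poissonPMF] using mul_le_mul_of_nonneg_right (Real.one_sub_le_exp_neg l) hl

variable {n : ℕ} (W : Perm (Fin n) → ℕ)

lemma hasSum_unifProb_eq : HasSum (fun k => unifProb {σ | W σ = k}) 1 := by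
  have hsum : HasSum (fun k => ∑ σ, if k = W σ then (1 : ℝ) else 0) (∑ _σ : Perm (Fin n), 1) :=
    hasSum_sum fun σ _ => hasSum_ite_eq (W σ) 1
  have htotal := hsum.div_const (n.factorial : ℝ)
  rw [show (∑ _σ : Perm (Fin n), (1 : ℝ)) / n.factorial = 1 from unifExp_const 1] at htotal
  simpa only [unifProb_setOf, unifExp, eq_comm] using htotal

lemma unifProb_nonneg (E : Set (Perm (Fin n))) : 0 ≤ unifProb E := by
  unfold unifProb; positivity

lemma unifProb_eq_one_le_unifExp : unifProb {σ | W σ = 1} ≤ unifExp fun σ => (W σ : ℝ) := by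
  rw [unifProb_setOf]
  refine unifExp_mono fun σ => ?_
  split_ifs with h <;> simp [h]

lemma one_sub_unifExp_le_unifProb_eq_zero :
    1 - unifExp (fun σ => (W σ : ℝ)) ≤ unifProb {σ | W σ = 0} := by
  have hsub := unifExp_sub (fun _ => 1) fun σ => (W σ : ℝ)
  rw [unifExp_const] at hsub
  rw [unifProb_setOf, ← hsub]
  refine unifExp_mono fun σ => ?_
  split_ifs with h
  · simp
  · simpa [Nat.one_le_iff_ne_zero] using h

lemma unifExp_sub_unifProb_eq_one :
    unifExp (fun σ => (W σ : ℝ)) - unifProb {σ | W σ = 1} =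
      unifExp fun σ => if 2 ≤ W σ then (W σ : ℝ) else 0 := by
  rw [unifProb_setOf, ← unifExp_sub]
  congr 1
  funext σ
  obtain h | h | h : W σ = 0 ∨ W σ = 1 ∨ 2 ≤ W σ := by omega
  · simp [h]
  · simp [h]
  · rw [if_neg (by omega), if_pos h, sub_zero]

variable {W}

lemma dTVNatUnif_le_one (hl : 0 ≤ l) : dTVNatUnif W l ≤ 1 := by
  have h := half_tsum_abs_sub_le (hasSum_unifProb_eq W) (hasSum_poissonPMF l) hasSum_zero
    (fun k => unifProb_nonneg _) (poissonPMF_nonneg hl)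
  rwa [sub_zero] at h

lemma dTVNatUnif_le_unifExp (hl : l = unifExp fun σ => (W σ : ℝ)) : dTVNatUnif W l ≤ l := by
  have hl0 : 0 ≤ l := hl ▸ unifExp_nonneg fun σ => Nat.cast_nonneg _
  have h := half_tsum_abs_sub_le (hasSum_unifProb_eq W) (hasSum_poissonPMF l)
    (hasSum_ite_eq 0 (1 - l)) (fun k => ?_) fun k => ?_
  · rwa [sub_sub_cancel] at h
  · split_ifs with hk
    · rw [hk, hl]
      exact one_sub_unifExp_le_unifProb_eq_zero W
    · exact unifProb_nonneg _
  · split_ifs with hk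
    · exact hk ▸ one_sub_le_poissonPMF_zero l
    · exact poissonPMF_nonneg hl0 k

lemma dTVNatUnif_le_unifExp_add_sq (hl : l = unifExp fun σ => (W σ : ℝ)) :
    dTVNatUnif W l ≤ unifExp (fun σ => if 2 ≤ W σ then (W σ : ℝ) else 0) + l ^ 2 := by
  have hl0 : 0 ≤ l := hl ▸ unifExp_nonneg fun σ => Nat.cast_nonneg _
  have hp1 : unifProb {σ | W σ = 1} ≤ l := hl ▸ unifProb_eq_one_le_unifExp W
  have h := half_tsum_abs_sub_le (hasSum_unifProb_eq W) (hasSum_poissonPMF l)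
    ((hasSum_ite_eq 0 (1 - l)).add (hasSum_ite_eq 1 (unifProb {σ | W σ = 1} - l ^ 2)))
    (fun k => ?_) fun k => ?_
  · rw [← unifExp_sub_unifProb_eq_one, ← hl]
    exact h.trans_eq (by ring)
  · obtain rfl | rfl | hk : k = 0 ∨ k = 1 ∨ 2 ≤ k := by omega
    · simpa [hl] using one_sub_unifExp_le_unifProb_eq_zero W
    · simpa using sq_nonneg l
    · rw [if_neg (by omega), if_neg (by omega), add_zero]
      exact unifProb_nonneg _
  · obtain rfl | rfl | hk : k = 0 ∨ k = 1 ∨ 2 ≤ k := by omega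
    · simpa using one_sub_le_poissonPMF_zero l
    · have hpois := one_sub_mul_le_poissonPMF_one hl0
      simp only [one_ne_zero, if_false, if_true]
      nlinarith
    · rw [if_neg (by omega), if_neg (by omega), add_zero]
      exact poissonPMF_nonneg hl0 k

end TotalVariation

section Weights

variable {j k m t : ℕ}

/-- The expected number of pairs consisting of `j + k` positions of a random permutation of `[n]`
carrying a given pattern and of `k` indices in `[j]`. -/
def overlapWeight (n j k : ℕ) : ℝ :=
  n.choose (j + k) / (j + k).factorial * j.choose k

lemma overlapWeight_nonneg (n j k : ℕ) : 0 ≤ overlapWeight n j k := by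
  unfold overlapWeight; positivity

lemma overlapWeight_eq_zero (h : t < k) : overlapWeight (j + t) j k = 0 := by
  simp [overlapWeight, Nat.choose_eq_zero_of_lt, h]

lemma mul_overlapWeight_succ (j k t : ℕ) :
    (k + 1) * (j + k + 1 : ℝ) ^ 2 * overlapWeight (j + t) j (k + 1) =
      ((t - k : ℕ) : ℝ) * ((j - k : ℕ) : ℝ) * overlapWeight (j + t) j k := by
  have hn : ((j + t).choose (j + k + 1) : ℝ) * (j + k + 1) =
      (j + t).choose (j + k) * ((t - k : ℕ) : ℝ) := by
    have h := Nat.choose_succ_right_eq (j + t) (j + k)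
    rw [Nat.add_sub_add_left] at h
    exact_mod_cast h
  have hj : (j.choose (k + 1) : ℝ) * (k + 1) = j.choose k * ((j - k : ℕ) : ℝ) := by
    exact_mod_cast Nat.choose_succ_right_eq j k
  unfold overlapWeight
  rw [← add_assoc, Nat.factorial_succ]
  push_cast
  field_simp
  linear_combination (j.choose (k + 1) : ℝ) * (k + 1) * hn +
    ((j + t).choose (j + k) : ℝ) * ((t - k : ℕ) : ℝ) * hj

lemma four_mul_overlapWeight_succ_le (ht : 4 * t ≤ j + 2) (hk : 1 ≤ k) :
    4 * (k + 1 : ℝ) * overlapWeight (j + t) j (k + 1) ≤ overlapWeight (j + t) j k := by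
  have hle : 4 * ((t - k) * (j - k)) ≤ (j + k + 1) ^ 2 := by
    nlinarith [Nat.mul_le_mul (by omega : 4 * (t - k) ≤ j) (Nat.sub_le j k)]
  have hle' : 4 * (((t - k : ℕ) : ℝ) * ((j - k : ℕ) : ℝ)) ≤ (j + k + 1 : ℝ) ^ 2 := by
    exact_mod_cast hle
  have hpos : (0 : ℝ) < (j + k + 1 : ℝ) ^ 2 := by positivity
  refine le_of_mul_le_mul_left ?_ hpos
  calc (j + k + 1 : ℝ) ^ 2 * (4 * (k + 1 : ℝ) * overlapWeight (j + t) j (k + 1))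
      = 4 * (((t - k : ℕ) : ℝ) * ((j - k : ℕ) : ℝ)) * overlapWeight (j + t) j k := by
        linear_combination 4 * mul_overlapWeight_succ j k t
    _ ≤ (j + k + 1 : ℝ) ^ 2 * overlapWeight (j + t) j k :=
        mul_le_mul_of_nonneg_right hle' (overlapWeight_nonneg _ _ _)

lemma choose_two_mul_succ_le (k : ℕ) :
    (2 * (k + 1)).choose (k + 1) ≤ 4 * (2 * k).choose k := by
  have h := Nat.succ_mul_centralBinom_succ k
  simp only [Nat.centralBinom] at h
  nlinarith

-- The negative right-hand side absorbs the next summand in the induction.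
lemma sum_codePairBound_mul_overlapWeight_le (ht : 4 * t ≤ j + 2) (hm : 7 ≤ m) :
    ∑ k ∈ Icc 1 m, ((codePairBound k : ℝ) / 2 - 3) * overlapWeight (j + t) j k ≤
      -(1 / 2) * ((2 * m).choose m : ℝ) ^ 2 * overlapWeight (j + t) j m := by
  have hstep {k : ℕ} (hk : 1 ≤ k) := four_mul_overlapWeight_succ_le ht hk
  induction m, hm using Nat.le_induction with
  | base =>
    have h1 := hstep (k := 1) le_rfl
    have h2 := hstep (k := 2) (by norm_num)
    have h3 := hstep (k := 3) (by norm_num)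
    have h4 := hstep (k := 4) (by norm_num)
    have h5 := hstep (k := 5) (by norm_num)
    have h6 := hstep (k := 6) (by norm_num)
    have hC : (2 * 7).choose 7 = 3432 := by decide
    norm_num at h1 h2 h3 h4 h5 h6
    norm_num [sum_Icc_succ_top, codePairBound, hC, Nat.choose]
    linarith [overlapWeight_nonneg (j + t) j 7]
  | succ m hm ih =>
    have hC : ((2 * (m + 1)).choose (m + 1) : ℝ) ^ 2 ≤ 16 * ((2 * m).choose m : ℝ) ^ 2 := by
      have h := Nat.pow_le_pow_left (choose_two_mul_succ_le m) 2
      rw [mul_pow] at h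
      exact_mod_cast h
    have hbound : (codePairBound (m + 1) : ℝ) = ((2 * (m + 1)).choose (m + 1) : ℝ) ^ 2 := by
      exact_mod_cast codePairBound_of_eight_le (by omega)
    have hw : 32 * overlapWeight (j + t) j (m + 1) ≤ overlapWeight (j + t) j m := by
      have hm' : (7 : ℝ) ≤ m := by exact_mod_cast hm
      nlinarith [hstep (k := m) (by omega), overlapWeight_nonneg (j + t) j (m + 1)]
    have hdom : 2 * (((2 * (m + 1)).choose (m + 1) : ℝ) ^ 2 * overlapWeight (j + t) j (m + 1)) ≤
        ((2 * m).choose m : ℝ) ^ 2 * overlapWeight (j + t) j m := by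
      calc _ ≤ 2 * (16 * ((2 * m).choose m : ℝ) ^ 2 * overlapWeight (j + t) j (m + 1)) := by
            gcongr
            exact overlapWeight_nonneg _ _ _
        _ = ((2 * m).choose m : ℝ) ^ 2 * (32 * overlapWeight (j + t) j (m + 1)) := by ring
        _ ≤ _ := by gcongr
    rw [sum_Icc_succ_top (by omega), hbound]
    linarith [overlapWeight_nonneg (j + t) j (m + 1)]

lemma sum_codePairBound_mul_overlapWeight_nonpos (ht : 4 * t ≤ j + 2) :
    ∑ k ∈ Icc 1 t, ((codePairBound k : ℝ) / 2 - 3) * overlapWeight (j + t) j k ≤ 0 := by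
  have hext : ∑ k ∈ Icc 1 t, ((codePairBound k : ℝ) / 2 - 3) * overlapWeight (j + t) j k =
      ∑ k ∈ Icc 1 (t + 7), ((codePairBound k : ℝ) / 2 - 3) * overlapWeight (j + t) j k := by
    refine sum_subset (Icc_subset_Icc_right (by omega)) fun k hk hk' => ?_
    rw [mem_Icc] at hk hk'
    rw [overlapWeight_eq_zero (by omega), mul_zero]
  have hsum := sum_codePairBound_mul_overlapWeight_le ht (m := t + 7) (by omega)
  rw [overlapWeight_eq_zero (by omega), mul_zero] at hsum
  exact hext.trans_le hsum

lemma four_pow_sub_two_le_factorial (hj : 6 ≤ j) : 4 ^ (j - 2) ≤ j.factorial := by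
  induction j, hj using Nat.le_induction with
  | base => decide
  | succ j hj ih =>
    rw [Nat.factorial_succ, show j + 1 - 2 = (j - 2) + 1 by omega, pow_succ, mul_comm]
    exact Nat.mul_le_mul (by omega) ih

lemma four_mul_le_of_four_mul_mul_lt (hj : 0 < j) (h : 4 * (t * j) < (j + 1) ^ 2) :
    4 * t ≤ j + 2 := by
  by_contra! ht
  nlinarith [Nat.mul_le_mul_right j ht]

lemma choose_le_factorial (hj : 3 ≤ j) (h : 4 * (t * j) < (j + 1) ^ 2) :
    (j + t).choose j ≤ j.factorial := by
  have ht := four_mul_le_of_four_mul_mul_lt (by omega) h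
  rcases Nat.lt_or_ge j 6 with hj6 | hj6
  · have ht1 : t ≤ 1 := by omega
    interval_cases t <;> interval_cases j <;> decide
  · calc (j + t).choose j ≤ 2 ^ (j + t) := Nat.choose_le_two_pow _ _
      _ ≤ 2 ^ (2 * (j - 2)) := Nat.pow_le_pow_right (by norm_num) (by omega)
      _ = 4 ^ (j - 2) := by rw [pow_mul]; norm_num
      _ ≤ j.factorial := four_pow_sub_two_le_factorial hj6

end Weights

section Approximation

variable {j n k t : ℕ}

/-- The sum `d₂` with the overlap counts `L_s(τ)` replaced by the union counts and with summation
index `k = j - s`, the number of positions outside the first of two occurrences covering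
`[j + k]`. -/
def unionSum (n : ℕ) (τ : Perm (Fin j)) : ℝ :=
  ∑ k ∈ Icc 1 (j - 1), (n.choose (j + k) : ℝ) * 2 * unionCount τ (j + k) / (j + k).factorial

lemma occurrences_eq_filter_card (τ : Perm (Fin j)) (σ : Perm (Fin n)) :
    occurrences τ σ = univ.filter fun α : Finset (Fin n) => #α = j ∧ OccursOn τ σ α := by
  ext α
  simp only [mem_occurrences, mem_filter, mem_univ, true_and]
  exact ⟨fun h => ⟨h.card, h⟩, And.right⟩

lemma unionSum_le_sum_overlapCount (n : ℕ) (τ : Perm (Fin j)) :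
    unionSum n τ ≤ ∑ s ∈ Icc 1 (j - 1),
      (n.choose (2 * j - s) : ℝ) * 2 * overlapCount τ s / (2 * j - s).factorial := by
  have hreflect : unionSum n τ = ∑ s ∈ Icc 1 (j - 1),
      (n.choose (2 * j - s) : ℝ) * 2 * unionCount τ (2 * j - s) / (2 * j - s).factorial := by
    refine sum_nbij' (j - ·) (j - ·) ?_ ?_ ?_ ?_ fun k hk => ?_
    iterate 4 simp only [mem_Icc]; omega
    have hjk : 2 * j - (j - k) = j + k := by rw [mem_Icc] at hk; omega
    rw [hjk]
  rw [hreflect]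
  gcongr with s hs
  exact unionCount_le_overlapCount τ (by rw [mem_Icc] at hs; omega)

lemma choose_div_factorial_le_two_mul_unionSum (hj : 2 ≤ j) (h : (j + 1) ^ 2 ≤ 4 * (t * j))
    (τ : Perm (Fin j)) :
    ((j + t).choose j : ℝ) / j.factorial ≤ 2 * unionSum (j + t) τ := by
  have hunion : (j : ℝ) ≤ unionCount τ (j + 1) := by
    exact_mod_cast (Nat.choose_one_right j).symm.trans_le (choose_le_unionCount τ 1)
  have hchoose : ((j + t).choose (j + 1) : ℝ) * (j + 1) = (j + t).choose j * t := by
    have h := Nat.choose_succ_right_eq (j + t) j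
    rw [Nat.add_sub_cancel_left] at h
    exact_mod_cast h
  have hsq : (j + 1 : ℝ) ^ 2 ≤ 4 * (t * j) := by exact_mod_cast h
  have hfirst : ((j + t).choose (j + 1) : ℝ) * 2 * unionCount τ (j + 1) / (j + 1).factorial ≤
      unionSum (j + t) τ :=
    single_le_sum (s := Icc 1 (j - 1))
      (f := fun k => ((j + t).choose (j + k) : ℝ) * 2 * unionCount τ (j + k) / (j + k).factorial)
      (fun k _ => by positivity) (mem_Icc.2 ⟨le_rfl, by omega⟩)
  calc ((j + t).choose j : ℝ) / j.factorial
      = (j + 1 : ℝ) ^ 2 * (((j + t).choose j : ℝ) / ((j + 1) ^ 2 * j.factorial)) := by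
        field_simp
    _ ≤ 4 * (t * j) * (((j + t).choose j : ℝ) / ((j + 1) ^ 2 * j.factorial)) := by gcongr
    _ = 2 * (((j + t).choose (j + 1) : ℝ) * 2 * j / (j + 1).factorial) := by
        rw [Nat.factorial_succ]
        push_cast
        field_simp
        linear_combination -4 * hchoose
    _ ≤ 2 * (((j + t).choose (j + 1) : ℝ) * 2 * unionCount τ (j + 1) / (j + 1).factorial) := by
        gcongr
    _ ≤ 2 * unionSum (j + t) τ := by gcongr

lemma isolatedTotal_le (hk : 1 ≤ k) (τ : Perm (Fin j)) :
    (isolatedTotal τ (j + k) : ℝ) ≤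
      4 * unionCount τ (j + k) + ((codePairBound k : ℝ) / 2 - 3) * j.choose k := by
  have hcodes : 2 * (isolatedTotal τ (j + k) : ℝ) ≤
      2 * unionCount τ (j + k) + j.choose k * codePairBound k := by
    exact_mod_cast two_mul_isolatedTotal_le hk τ (card_codePairs_le_codePairBound k)
  have hunion : (j.choose k : ℝ) ≤ unionCount τ (j + k) := by
    exact_mod_cast choose_le_unionCount τ k
  linarith

lemma unifExp_multiple_le_two_mul_unionSum (h : 4 * (t * j) < (j + 1) ^ 2) (htj : t < j)
    (τ : Perm (Fin j)) :
    unifExp (fun σ : Perm (Fin (j + t)) =>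
      if 2 ≤ #(occurrences τ σ) then (#(occurrences τ σ) : ℝ) else 0) ≤
        2 * unionSum (j + t) τ := by
  have hterm (k : ℕ) (hk : k ∈ Icc 1 t) :
      ((j + t).choose (j + k) : ℝ) / (j + k).factorial * isolatedTotal τ (j + k) ≤
        2 * (((j + t).choose (j + k) : ℝ) * 2 * unionCount τ (j + k) / (j + k).factorial) +
          ((codePairBound k : ℝ) / 2 - 3) * overlapWeight (j + t) j k := by
    calc _ ≤ ((j + t).choose (j + k) : ℝ) / (j + k).factorial *
          (4 * unionCount τ (j + k) + ((codePairBound k : ℝ) / 2 - 3) * j.choose k) := by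
          gcongr
          exact isolatedTotal_le (mem_Icc.1 hk).1 τ
      _ = _ := by rw [overlapWeight]; ring
  have hsubset :
      ∑ k ∈ Icc 1 t,
        ((j + t).choose (j + k) : ℝ) * 2 * unionCount τ (j + k) / (j + k).factorial ≤
          unionSum (j + t) τ :=
    sum_le_sum_of_subset_of_nonneg (Icc_subset_Icc_right (by omega)) fun k _ _ => by positivity
  have hcorrection := sum_codePairBound_mul_overlapWeight_nonpos
    (four_mul_le_of_four_mul_mul_lt (by omega) h)
  have htotal := unifExp_multiple_le_sum_isolatedTotal (j + t) τ
  rw [Nat.add_sub_cancel_left] at htotal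
  have hsum := sum_le_sum hterm
  rw [sum_add_distrib, ← mul_sum] at hsum
  linarith

lemma dTVNatUnif_occurrences_le_of_le (hj : 2 ≤ j) (h : (j + 1) ^ 2 ≤ 4 * (t * j))
    (τ : Perm (Fin j)) {l : ℝ} (hl : l = (j + t).choose j / j.factorial) :
    dTVNatUnif (fun σ : Perm (Fin (j + t)) => #(occurrences τ σ)) l ≤
      2 * (min 1 l⁻¹ * unionSum (j + t) τ) := by
  have hpos : 0 < l := by
    have := Nat.choose_pos (Nat.le_add_right j t)
    rw [hl]; positivity
  have hmean : l = unifExp fun σ : Perm (Fin (j + t)) => (#(occurrences τ σ) : ℝ) := by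
    rw [hl, unifExp_card_occurrences]
  calc dTVNatUnif (fun σ : Perm (Fin (j + t)) => #(occurrences τ σ)) l
      ≤ min l 1 := le_min (dTVNatUnif_le_unifExp hmean) (dTVNatUnif_le_one hpos.le)
    _ = min 1 l⁻¹ * l := by
        rw [min_mul_of_nonneg _ _ hpos.le, one_mul, inv_mul_cancel₀ hpos.ne']
    _ ≤ min 1 l⁻¹ * (2 * unionSum (j + t) τ) := by
        gcongr
        exact hl.trans_le (choose_div_factorial_le_two_mul_unionSum hj h τ)
    _ = 2 * (min 1 l⁻¹ * unionSum (j + t) τ) := by ring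

lemma dTVNatUnif_occurrences_le_of_lt (h : 4 * (t * j) < (j + 1) ^ 2) (htj : t < j)
    (τ : Perm (Fin j)) {l : ℝ} (hl : l = (j + t).choose j / j.factorial) :
    dTVNatUnif (fun σ : Perm (Fin (j + t)) => #(occurrences τ σ)) l ≤
      2 * unionSum (j + t) τ + l ^ 2 := by
  have hmean : l = unifExp fun σ : Perm (Fin (j + t)) => (#(occurrences τ σ) : ℝ) := by
    rw [hl, unifExp_card_occurrences]
  calc _ ≤ _ := dTVNatUnif_le_unifExp_add_sq hmean
    _ ≤ _ := by gcongr; exact unifExp_multiple_le_two_mul_unionSum h htj τ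

end Approximation

end

/-- Theorem: Poisson approximation for the number of occurrences of a pattern `τ` of
length `j` in a uniformly random permutation of `[n]`. -/
theorem stmt0 (n j : ℕ) (hj : 3 ≤ j) (hjn : j ≤ n) (τ : Equiv.Perm (Fin j))
    (W : Equiv.Perm (Fin n) → ℕ)
    (hW : ∀ σ, W σ = (Finset.univ.filter fun α : Finset (Fin n) =>
        α.card = j ∧ OccursOn τ σ α).card)
    (lam d1 d2 D : ℝ)
    (hlam : lam = (n.choose j : ℝ) / (j.factorial : ℝ))
    (hd1 : d1 = (n.choose j : ℝ) * ((n.choose j : ℝ) - ((n - j).choose j : ℝ))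
        / (j.factorial : ℝ) ^ 2)
    (hd2 : d2 = ∑ s ∈ Finset.Icc 1 (j - 1),
        (n.choose (2 * j - s) : ℝ) * 2 * (overlapCount τ s : ℝ) / ((2 * j - s).factorial : ℝ))
    (hD : D = min 1 lam⁻¹ * (d1 + d2)) :
    dTVNatUnif W lam ≤ 2 * D := by
  obtain rfl : W = fun σ => (occurrences τ σ).card := funext fun σ => by
    rw [hW, occurrences_eq_filter_card]
  have hunion : unionSum n τ ≤ d2 := hd2 ▸ unionSum_le_sum_overlapCount n τ
  obtain ⟨t, rfl⟩ := Nat.exists_eq_add_of_le hjn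
  rcases le_or_gt ((j + 1) ^ 2) (4 * (t * j)) with h | h
  · have hd1_nonneg : 0 ≤ d1 := by
      have hchoose : ((j + t - j).choose j : ℝ) ≤ (j + t).choose j := by
        exact_mod_cast Nat.choose_le_choose j (Nat.sub_le _ _)
      rw [hd1]
      exact div_nonneg (mul_nonneg (Nat.cast_nonneg _) (sub_nonneg.2 hchoose)) (sq_nonneg _)
    have hmin : 0 ≤ min 1 lam⁻¹ := by rw [hlam]; positivity
    refine (dTVNatUnif_occurrences_le_of_le (by omega) h τ hlam).trans ?_
    rw [hD]
    gcongr
    linarith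
  · have htj : t < j := by linarith [four_mul_le_of_four_mul_mul_lt (by omega) h]
    have hd1_eq : d1 = lam ^ 2 := by
      rw [hd1, hlam, Nat.add_sub_cancel_left, Nat.choose_eq_zero_of_lt htj]
      ring
    have hmin : min 1 lam⁻¹ = 1 := by
      rw [hlam, inv_div]
      refine min_eq_left ((one_le_div (mod_cast Nat.choose_pos hjn)).2 ?_)
      exact_mod_cast choose_le_factorial hj h
    rw [hD, hmin, one_mul]
    linarith [dTVNatUnif_occurrences_le_of_lt h htj τ hlam, sq_nonneg lam]

end
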